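/- Let {S_i}_{i=1}^l be the affine IFS S_i(x) = A x + c_i on ℝ^d with ‖A‖ < 1, K its attractor, and π : Σ → K the canonical projection. Then for every f ∈ C(K), the limit lim_{n→∞} (1/n) log Σ_{Q ∈ Q_n, Q∩K ≠ ∅} sup_{α ∈ π^{-1}(Q∩K)} exp((S_n f∘π)(α)) exists and equals sup { h_π(σ,m) + ∫ f∘π dm : m ∈ M_σ(Σ) }. -/

import Mathlib

/-!
The proof compares the partition function with the entropy of the partitions of `ℝ^d` into the cells
`A^N ([0,1)^d + α)`, restricted to the finitely many cells which meet the image of `π`.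

**Projection entropy through finite partitions.** Everything is expressed through entropies of finite
partitions. As the cells shrink, the conditional entropy given `π` is the limit of the conditional
entropies given the cell of `π x` (`FinePartitions.tendsto_cent`); the cell partitions need not be
nested. Write `w_k x` for the word of the first `k` letters of `x` and, for any probability measure
`ν`, put `blockEnt π k ν = H(w_k | π ∘ σ^k) - H(w_k | π)`. Since `π x` and `π (σ^k x)` determine each
other once `w_k x` is known, the chain rule telescopes (`IsCoding.blockEnt_eq_sum`), and
`blockEnt π k m = k h_π(σ, m)` for invariant `m` (`IsCoding.blockEnt_of_invariant`).

**Lower bound for the limit.** Let `m` be invariant and let `a N` be the entropy of the level `N` cell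
of `π x`. By self-affinity, given `w_k x`, the level `N + k` cell of `π x` determines the level `N` cell
of `π (σ^k x)` up to a bounded number of choices. Hence `a (N + k) - a N ≥ k h_π(σ, m) - C` for large
`N`, with `C` independent of `k` (`AffineCoding.exists_increment`), and letting `k` grow gives
`liminf a N / N ≥ h_π(σ, m)`. The Gibbs inequality `a N + N ∫ f∘π dm ≤ log Z_N`
(`AffineCoding.ent_add_le_log_Zsum`) concludes.

**Upper bound for the limit.** Fix `k`, choose in each cell of level `k` a coded point whose Birkhoff
sum is nearly maximal, and concatenate independent random choices of the words of length `k` of these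
points, with Gibbs weights. This gives a `σ^k`-invariant measure whose block entropy is at least the
entropy of the weights up to a constant (`AffineCoding.le_blockEnt_concat`). Averaging over a period
makes it `σ`-invariant and costs only `2 log k` (`IsCoding.blockEnt_periodAvg`). As the Birkhoff sums
depend on the first `k` letters only, up to `o(k)`, the average `m` satisfies
`log Z_k ≤ k (h_π(σ, m) + ∫ f∘π dm) + o(k)` (`AffineCoding.exists_log_Zsum_le`).
-/

/- Projection pressure for affine IFS (Wang–Chen).
   Statement 0: variational principle / existence of projection pressure. -/

open MeasureTheory Filter Set

noncomputable section

/-- The symbolic space `Σ = {1,…,l}^ℕ`. -/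
abbrev Sig (l : ℕ) := ℕ → Fin l

/-- The left shift `σ` on `Σ`. -/
def shift {l : ℕ} (x : Sig l) : Sig l := fun n => x (n + 1)

/-- First-coordinate cylinder partition `P = {[j] : 1 ≤ j ≤ l}`. -/
def cylP {l : ℕ} : Fin l → Set (Sig l) := fun j => {x | x 0 = j}

/-- Conditional entropy `H_μ(ξ | 𝒜) = ∫ I_μ(ξ|𝒜) dμ` of a finite partition `ξ`
    given a sub-σ-algebra `𝒜`, where
    `I_μ(ξ|𝒜) = -∑_{A ∈ ξ} 1_A · log E_μ(1_A | 𝒜)`. -/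
def condEntropyPart {α : Type*} [MeasurableSpace α] {ι : Type*} [Fintype ι]
    (μ : Measure α) (part : ι → Set α) (m : MeasurableSpace α) : ℝ :=
  ∑ i : ι, ∫ x in part i,
    -Real.log ((μ[(part i).indicator (fun _ => (1 : ℝ)) | m]) x) ∂μ

/-- Projection entropy `h_π(σ,μ) = H_μ(P | σ⁻¹π⁻¹γ) − H_μ(P | π⁻¹γ)`. -/
def projEntropy {l : ℕ} {E : Type*} [mE : MeasurableSpace E]
    (π : Sig l → E) (μ : Measure (Sig l)) : ℝ :=
  condEntropyPart μ cylP (MeasurableSpace.comap (fun x => π (shift x)) mE)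
    - condEntropyPart μ cylP (MeasurableSpace.comap π mE)

/-- `itIm S K x n = S_{x 0} ∘ ⋯ ∘ S_{x (n-1)} (K)`. -/
def itIm {l : ℕ} {E : Type*} (S : Fin l → E → E) (K : Set E) : Sig l → ℕ → Set E
  | _, 0 => K
  | x, n + 1 => S (x 0) '' itIm S K (shift x) n

/-- The half-open unit cube `[0,1)^d + α` of the partition `𝒬` of `ℝ^d`. -/
def cube (d : ℕ) (α : Fin d → ℤ) : Set (EuclideanSpace ℝ (Fin d)) :=
  {x | ∀ i, (α i : ℝ) ≤ x i ∧ x i < (α i : ℝ) + 1}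

/-- Birkhoff sum `S_n g (x) = ∑_{i<n} g(σ^i x)`. -/
def birk {l : ℕ} (g : Sig l → ℝ) (n : ℕ) (x : Sig l) : ℝ :=
  ∑ i ∈ Finset.range n, g (shift^[i] x)

/-- The partition function
`∑_{Q ∈ 𝒬_n, Q ∩ K ≠ ∅} sup_{α ∈ π⁻¹(Q ∩ K)} exp((S_n f∘π)(α))`,
where `𝒬_n = {Aⁿ Q : Q ∈ 𝒬}`; cubes not meeting `K` contribute `0`. -/
def Zsum {d l : ℕ} (A : EuclideanSpace ℝ (Fin d) →L[ℝ] EuclideanSpace ℝ (Fin d))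
    (K : Set (EuclideanSpace ℝ (Fin d))) (π : Sig l → EuclideanSpace ℝ (Fin d))
    (f : EuclideanSpace ℝ (Fin d) → ℝ) (n : ℕ) : ℝ :=
  ∑' α : Fin d → ℤ,
    ⨆ β ∈ π ⁻¹' ((⇑(A ^ n) '' cube d α) ∩ K), Real.exp (birk (fun y => f (π y)) n β)

set_option linter.unusedSectionVars false

section Auxiliary

open Real (negMulLog)

/-! ### Entropy of finite partitions -/

section FiniteEntropy

variable {Ω ι κ τ : Type*} [MeasurableSpace Ω]
  [Fintype ι] [MeasurableSpace ι] [MeasurableSingletonClass ι]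
  [Fintype κ] [MeasurableSpace κ] [MeasurableSingletonClass κ]
  [Fintype τ] [MeasurableSpace τ] [MeasurableSingletonClass τ]

/-- Shannon entropy of the finite partition of `Ω` into the fibres of `u : Ω → ι`. -/
def ent (μ : Measure Ω) (u : Ω → ι) : ℝ := ∑ i, negMulLog (μ.real (u ⁻¹' {i}))

/-- Conditional entropy `H(u | v)` of finite partitions, both given by their label functions. -/
def cent (μ : Measure Ω) (u : Ω → ι) (v : Ω → κ) : ℝ :=
  ent μ (fun ω => (u ω, v ω)) - ent μ v

lemma real_fibre_eq_sum (μ : Measure Ω) [IsProbabilityMeasure μ] {u : Ω → ι} {v : Ω → κ}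
    (hu : Measurable u) (hv : Measurable v) (j : κ) :
    μ.real (v ⁻¹' {j}) = ∑ i, μ.real ((fun ω => (u ω, v ω)) ⁻¹' {(i, j)}) := by
  rw [← measureReal_biUnion_finset]
  · congr 1
    ext ω
    simp
  · intro i _ i' _ hii
    rw [Function.onFun, Set.disjoint_left]
    intro ω h1 h2
    simp only [mem_preimage, mem_singleton_iff, Prod.mk.injEq] at h1 h2
    exact hii (h1.1.symm.trans h2.1)
  · intro i _
    exact (hu.prodMk hv) (measurableSet_singleton _)

lemma sum_fibre_eq_one (μ : Measure Ω) [IsProbabilityMeasure μ] {u : Ω → ι}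
    (hu : Measurable u) : ∑ i, μ.real (u ⁻¹' {i}) = 1 := by
  have h := real_fibre_eq_sum μ hu (measurable_const (a := ())) ()
  have h1 : μ.real ((fun _ : Ω => ()) ⁻¹' {()}) = 1 := by
    have : ((fun _ : Ω => ()) ⁻¹' {()}) = univ := by ext; simp
    rw [this]; simp
  rw [← h1, h]
  refine Finset.sum_congr rfl fun i _ => ?_
  congr 1
  ext ω
  simp

/-- Subadditivity of `η(t) = -t log t` on nonnegative reals. -/
lemma negMulLog_sum_le {α : Type*} (s : Finset α) (a : α → ℝ) (ha : ∀ i, 0 ≤ a i) :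
    negMulLog (∑ i ∈ s, a i) ≤ ∑ i ∈ s, negMulLog (a i) := by
  have : negMulLog (∑ i ∈ s, a i) = ∑ i ∈ s, -a i * Real.log (∑ i ∈ s, a i) := by
    rw [negMulLog, ← Finset.sum_neg_distrib, Finset.sum_mul]
  rw [this]
  refine Finset.sum_le_sum fun i hi => ?_
  rw [negMulLog]
  rcases (ha i).eq_or_lt with h | h
  · simp [← h]
  · have h2 : a i ≤ ∑ i ∈ s, a i := Finset.single_le_sum (fun j _ => ha j) hi
    have := Real.log_le_log h h2
    nlinarith

/-- Entropy decreases when passing to a coarser partition. -/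
lemma ent_mono (μ : Measure Ω) [IsProbabilityMeasure μ] {u : Ω → ι} {v : Ω → κ}
    (hu : Measurable u) (hv : Measurable v) (h : ∀ a b, u a = u b → v a = v b) :
    ent μ v ≤ ent μ u := by
  classical
  have key : ∀ i, negMulLog (μ.real (u ⁻¹' {i}))
      = ∑ j, negMulLog (μ.real ((fun ω => (u ω, v ω)) ⁻¹' {(i, j)})) := by
    intro i
    by_cases hi : ∃ a, u a = i
    · obtain ⟨a, rfl⟩ := hi
      rw [Finset.sum_eq_single (v a)]
      · congr 2
        ext ω
        simp only [mem_preimage, mem_singleton_iff, Prod.mk.injEq]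
        exact ⟨fun hh => ⟨hh, h _ _ hh⟩, fun hh => hh.1⟩
      · intro j _ hj
        have : ((fun ω => (u ω, v ω)) ⁻¹' {(u a, j)}) = ∅ := by
          ext ω
          simp only [mem_preimage, mem_singleton_iff, Prod.mk.injEq, mem_empty_iff_false,
            iff_false, not_and]
          intro hh hj'
          exact hj (hj'.symm.trans (h _ _ hh))
        simp [this]
      · simp
    · have h1 : u ⁻¹' {i} = ∅ := by
        ext ω
        simpa using fun hh => hi ⟨ω, hh⟩
      have h2 : ∀ j, ((fun ω => (u ω, v ω)) ⁻¹' {(i, j)}) = ∅ := by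
        intro j
        ext ω
        simpa using fun hh => absurd ⟨ω, hh⟩ hi
      simp [h1, h2]
  unfold ent
  simp_rw [key]
  rw [Finset.sum_comm]
  refine Finset.sum_le_sum fun j _ => ?_
  rw [real_fibre_eq_sum μ hu hv j]
  exact negMulLog_sum_le _ _ fun _ => measureReal_nonneg

lemma ent_congr (μ : Measure Ω) [IsProbabilityMeasure μ] {u : Ω → ι} {v : Ω → κ}
    (hu : Measurable u) (hv : Measurable v) (h : ∀ a b, u a = u b ↔ v a = v b) :
    ent μ v = ent μ u :=
  le_antisymm (ent_mono μ hu hv fun a b => (h a b).1) (ent_mono μ hv hu fun a b => (h a b).2)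

/-- Change of labels: an average over the cells of `g ∘ U` is an average over the cells of `U`. -/
lemma sum_fibre_comp (μ : Measure Ω) [IsProbabilityMeasure μ] {U : Ω → ι} (hU : Measurable U)
    (g : ι → κ) (F : κ → ℝ) :
    ∑ j, μ.real ((fun ω => g (U ω)) ⁻¹' {j}) * F j = ∑ x, μ.real (U ⁻¹' {x}) * F (g x) := by
  classical
  rw [← Finset.sum_fiberwise Finset.univ g]
  refine Finset.sum_congr rfl fun j _ => ?_
  have : μ.real ((fun ω => g (U ω)) ⁻¹' {j})
      = ∑ x with g x = j, μ.real (U ⁻¹' {x}) := by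
    rw [← measureReal_biUnion_finset]
    · congr 1
      ext ω
      simp
    · intro i _ i' _ hii
      rw [Function.onFun, Set.disjoint_left]
      intro ω h1 h2
      exact hii (h1.symm.trans h2)
    · intro i _
      exact hU (measurableSet_singleton _)
  rw [this, Finset.sum_mul]
  refine Finset.sum_congr rfl fun x hx => ?_
  rw [(Finset.mem_filter.1 hx).2]

/-- Entropy of the coarsening `g ∘ U`, as an average over the cells of `U`. This puts the entropies of
several coarsenings of one partition over a common index set. -/
lemma ent_comp (μ : Measure Ω) [IsProbabilityMeasure μ] {U : Ω → ι} (hU : Measurable U)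
    (g : ι → κ) :
    ent μ (fun ω => g (U ω))
      = ∑ x, μ.real (U ⁻¹' {x}) * -Real.log (μ.real ((fun ω => g (U ω)) ⁻¹' {g x})) := by
  rw [← sum_fibre_comp μ hU g (fun j => -Real.log (μ.real ((fun ω => g (U ω)) ⁻¹' {j})))]
  refine Finset.sum_congr rfl fun j _ => ?_
  rw [negMulLog]
  ring

/-- Strong subadditivity of entropy, i.e. nonnegativity of conditional mutual information. -/
lemma ent_submod (μ : Measure Ω) [IsProbabilityMeasure μ] {u : Ω → ι} {v : Ω → κ} {w : Ω → τ}
    (hu : Measurable u) (hv : Measurable v) (hw : Measurable w) :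
    ent μ (fun ω => (u ω, v ω, w ω)) + ent μ w
      ≤ ent μ (fun ω => (u ω, w ω)) + ent μ (fun ω => (v ω, w ω)) := by
  set U : Ω → ι × κ × τ := fun ω => (u ω, v ω, w ω) with hUd
  have hU : Measurable U := hu.prodMk (hv.prodMk hw)
  set p : ι × κ × τ → ℝ := fun x => μ.real (U ⁻¹' {x}) with hp
  set a : ι → τ → ℝ := fun i k => μ.real ((fun ω => (u ω, w ω)) ⁻¹' {(i, k)}) with ha
  set b : κ → τ → ℝ := fun j k => μ.real ((fun ω => (v ω, w ω)) ⁻¹' {(j, k)}) with hb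
  set q : τ → ℝ := fun k => μ.real (w ⁻¹' {k}) with hq
  have hpn : ∀ x, 0 ≤ p x := fun _ => measureReal_nonneg
  have hqn : ∀ x, 0 ≤ q x := fun _ => measureReal_nonneg
  have hqa : ∀ k, q k = ∑ i, a i k := fun k => real_fibre_eq_sum μ hu hw k
  have hqb : ∀ k, q k = ∑ j, b j k := fun k => real_fibre_eq_sum μ hv hw k
  have hqs : ∑ k, q k = 1 := sum_fibre_eq_one μ hw
  have hps : ∑ x, p x = 1 := sum_fibre_eq_one μ hU
  have e1 : ent μ U = ∑ x, p x * -Real.log (p x) := ent_comp μ hU id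
  have e2 : ent μ w = ∑ x, p x * -Real.log (q x.2.2) := ent_comp μ hU fun x => x.2.2
  have e3 : ent μ (fun ω => (u ω, w ω)) = ∑ x, p x * -Real.log (a x.1 x.2.2) :=
    ent_comp μ hU fun x => (x.1, x.2.2)
  have e4 : ent μ (fun ω => (v ω, w ω)) = ∑ x, p x * -Real.log (b x.2.1 x.2.2) :=
    ent_comp μ hU fun x => (x.2.1, x.2.2)
  have hs : ∑ x : ι × κ × τ, a x.1 x.2.2 * b x.2.1 x.2.2 / q x.2.2 = 1 := by
    rw [← hqs, Fintype.sum_prod_type]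
    simp_rw [Fintype.sum_prod_type]
    calc ∑ i, ∑ j, ∑ k, a i k * b j k / q k
        = ∑ i, ∑ k, ∑ j, a i k * b j k / q k :=
          Finset.sum_congr rfl fun i _ => Finset.sum_comm
      _ = ∑ k, ∑ i, ∑ j, a i k * b j k / q k := Finset.sum_comm
      _ = ∑ k, q k := by
          refine Finset.sum_congr rfl fun k _ => ?_
          have : ∑ i, ∑ j, a i k * b j k / q k = q k * q k / q k := by
            nth_rewrite 2 [hqa k]
            nth_rewrite 2 [hqb k]
            rw [Finset.sum_mul_sum, Finset.sum_div]
            simp_rw [Finset.sum_div]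
          rw [this]
          rcases eq_or_ne (q k) 0 with h | h
          · simp [h]
          · field_simp
  have hpa : ∀ x, p x ≤ a x.1 x.2.2 := fun x => by
    refine measureReal_mono ?_
    rintro ω hω
    simp only [hUd, mem_preimage, mem_singleton_iff] at hω
    simp [← hω]
  have hpb : ∀ x, p x ≤ b x.2.1 x.2.2 := fun x => by
    refine measureReal_mono ?_
    rintro ω hω
    simp only [hUd, mem_preimage, mem_singleton_iff] at hω
    simp [← hω]
  have hpq : ∀ x, p x ≤ q x.2.2 := fun x => by
    refine measureReal_mono ?_
    rintro ω hω
    simp only [hUd, mem_preimage, mem_singleton_iff] at hω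
    simp [← hω]
  -- termwise, this is `log t ≤ t - 1` at `t = a b / (q p)`
  have key : ∑ x, (p x * -Real.log (p x) + p x * -Real.log (q x.2.2)
      - p x * -Real.log (a x.1 x.2.2) - p x * -Real.log (b x.2.1 x.2.2))
      ≤ ∑ x : ι × κ × τ, (a x.1 x.2.2 * b x.2.1 x.2.2 / q x.2.2 - p x) := by
    refine Finset.sum_le_sum fun x _ => ?_
    rcases (hpn x).eq_or_lt with h | h
    · rw [← h]
      have := div_nonneg (mul_nonneg ((hpn x).trans (hpa x)) ((hpn x).trans (hpb x))) (hqn x.2.2)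
      simpa using this
    · have ha0 := h.trans_le (hpa x)
      have hb0 := h.trans_le (hpb x)
      have hq0 := h.trans_le (hpq x)
      have hl := Real.log_le_sub_one_of_pos
        (show 0 < a x.1 x.2.2 * b x.2.1 x.2.2 / (q x.2.2 * p x) by positivity)
      rw [Real.log_div (by positivity) (by positivity), Real.log_mul ha0.ne' hb0.ne',
        Real.log_mul hq0.ne' h.ne'] at hl
      have h2 := mul_le_mul_of_nonneg_left hl h.le
      have h3 : p x * (a x.1 x.2.2 * b x.2.1 x.2.2 / (q x.2.2 * p x) - 1)
          = a x.1 x.2.2 * b x.2.1 x.2.2 / q x.2.2 - p x := by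
        field_simp
      linarith
  simp only [Finset.sum_sub_distrib, Finset.sum_add_distrib] at key
  rw [e1, e2, e3, e4]
  linarith

lemma ent_nonneg (μ : Measure Ω) [IsProbabilityMeasure μ] (u : Ω → ι) : 0 ≤ ent μ u :=
  Finset.sum_nonneg fun _ _ => Real.negMulLog_nonneg measureReal_nonneg measureReal_le_one

lemma ent_le_log_card (μ : Measure Ω) [IsProbabilityMeasure μ] {u : Ω → ι} (hu : Measurable u) :
    ent μ u ≤ Real.log (Fintype.card ι) := by
  have hne : Nonempty ι := by
    by_contra h
    have := sum_fibre_eq_one μ hu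
    rw [not_nonempty_iff] at h
    simp at this
  set N : ℝ := ((Fintype.card ι : ℕ) : ℝ) with hN
  have hN0 : 0 < N := by
    rw [hN]; exact_mod_cast Fintype.card_pos
  have key : ∀ i, negMulLog (μ.real (u ⁻¹' {i}))
      ≤ μ.real (u ⁻¹' {i}) * Real.log N + (1 / N - μ.real (u ⁻¹' {i})) := by
    intro i
    set x := μ.real (u ⁻¹' {i})
    have hx : 0 ≤ x := measureReal_nonneg
    have h1 := Real.negMulLog_le_one_sub_self (mul_nonneg hx hN0.le)
    rw [Real.negMulLog_mul] at h1
    have h2 : negMulLog N = - N * Real.log N := rfl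
    rw [h2] at h1
    have h3 : N * negMulLog x ≤ N * (x * Real.log N + (1 / N - x)) := by
      have : N * (1 / N) = 1 := by field_simp
      nlinarith
    exact le_of_mul_le_mul_left h3 hN0
  calc ent μ u ≤ ∑ i, (μ.real (u ⁻¹' {i}) * Real.log N + (1 / N - μ.real (u ⁻¹' {i}))) :=
        Finset.sum_le_sum fun i _ => key i
    _ = Real.log N := by
        rw [Finset.sum_add_distrib, ← Finset.sum_mul, Finset.sum_sub_distrib,
          sum_fibre_eq_one μ hu]
        simp [← hN, hN0.ne']

/-- Subadditivity of entropy: strong subadditivity relative to a trivial partition. -/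
lemma ent_pair_le (μ : Measure Ω) [IsProbabilityMeasure μ] {u : Ω → ι} {v : Ω → κ}
    (hu : Measurable u) (hv : Measurable v) :
    ent μ (fun ω => (u ω, v ω)) ≤ ent μ u + ent μ v := by
  have h := ent_submod μ hu hv (measurable_const (a := ()))
  have h0 := ent_nonneg μ (fun _ : Ω => ())
  have h1 := ent_congr μ (hu.prodMk (hv.prodMk (measurable_const (a := ())))) (hu.prodMk hv)
    (by simp)
  have h2 := ent_congr μ (hu.prodMk (measurable_const (a := ()))) hu (by simp)
  have h3 := ent_congr μ (hv.prodMk (measurable_const (a := ()))) hv (by simp)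
  linarith

lemma cent_nonneg (μ : Measure Ω) [IsProbabilityMeasure μ] {u : Ω → ι} {v : Ω → κ}
    (hu : Measurable u) (hv : Measurable v) : 0 ≤ cent μ u v :=
  sub_nonneg.2 (ent_mono μ (hu.prodMk hv) hv fun _ _ h => (Prod.mk.inj h).2)

lemma cent_le_ent (μ : Measure Ω) [IsProbabilityMeasure μ] {u : Ω → ι} {v : Ω → κ}
    (hu : Measurable u) (hv : Measurable v) : cent μ u v ≤ ent μ u := by
  have := ent_pair_le μ hu hv
  unfold cent
  linarith

/-- Conditioning on a finer partition decreases entropy. -/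
lemma cent_anti (μ : Measure Ω) [IsProbabilityMeasure μ] {u : Ω → ι} {v : Ω → κ} {w : Ω → τ}
    (hu : Measurable u) (hv : Measurable v) (hw : Measurable w)
    (h : ∀ a b, v a = v b → w a = w b) : cent μ u v ≤ cent μ u w := by
  have h1 := ent_submod μ hu hv hw
  have h2 := ent_congr μ (hu.prodMk (hv.prodMk hw)) (hu.prodMk hv) (by
    intro a b
    simp only [Prod.mk.injEq]
    have := h a b
    tauto)
  have h3 := ent_congr μ (hv.prodMk hw) hv (by
    intro a b
    simp only [Prod.mk.injEq]
    have := h a b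
    tauto)
  unfold cent
  linarith

/-- The triangle inequality `H(u | w) ≤ H(u | v) + H(v | w)`. -/
lemma cent_triangle (μ : Measure Ω) [IsProbabilityMeasure μ] {u : Ω → ι} {v : Ω → κ} {w : Ω → τ}
    (hu : Measurable u) (hv : Measurable v) (hw : Measurable w) :
    cent μ u w ≤ cent μ u v + cent μ v w := by
  have h1 := cent_anti μ hu (hw.prodMk hv) hv (by simp)
  have h2 := ent_mono μ (hu.prodMk (hw.prodMk hv)) (hu.prodMk hw) (by simp +contextual)
  have h3 := ent_congr μ (hw.prodMk hv) (hv.prodMk hw) (by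
    intro a b
    simp only [Prod.mk.injEq]
    tauto)
  unfold cent at *
  linarith

/-- If `u` is determined by `v` and an error variable `e`, then its entropy exceeds that of `v` by
at most the entropy of `e`. -/
lemma ent_le_add_of_det (μ : Measure Ω) [IsProbabilityMeasure μ] {u : Ω → ι} {v : Ω → κ}
    {e : Ω → τ} (hu : Measurable u) (hv : Measurable v) (he : Measurable e)
    (h : ∀ a b, v a = v b → e a = e b → u a = u b) : ent μ u ≤ ent μ v + ent μ e := by
  have h1 := ent_mono μ (hv.prodMk he) hu (by
    intro a b hab
    simp only [Prod.mk.injEq] at hab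
    exact h a b hab.1 hab.2)
  have h2 := ent_pair_le μ hv he
  linarith

/-- Fano-type estimate: `H(u | v)` is small when `u = v` outside a set of small measure. -/
lemma exists_cent_le (ι : Type*) [Fintype ι] [MeasurableSpace ι] [MeasurableSingletonClass ι]
    {ε : ℝ} (hε : 0 < ε) :
    ∃ δ > 0, ∀ {Ω : Type*} [MeasurableSpace Ω] (μ : Measure Ω) [IsProbabilityMeasure μ]
      (u v : Ω → ι), Measurable u → Measurable v → μ.real {ω | u ω ≠ v ω} ≤ δ →
        cent μ u v ≤ ε := by
  classical
  set c : ℝ := ε / (Fintype.card ι + 1) with hc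
  have hc0 : 0 < c := by positivity
  obtain ⟨δ₀, h00, h0⟩ := Metric.continuousAt_iff.1
    (Real.continuous_negMulLog.continuousAt (x := 0)) c hc0
  obtain ⟨δ₁, h10, h1⟩ := Metric.continuousAt_iff.1
    (Real.continuous_negMulLog.continuousAt (x := 1)) c hc0
  refine ⟨min δ₀ δ₁ / 2, by positivity, ?_⟩
  intro Ω _ μ _ u v hu hv huv
  let _ : MeasurableSpace (Option ι) := ⊤
  -- `e` corrects `v` to `u`; it equals `none` with probability close to `1`
  set e : Ω → Option ι := fun ω => if u ω = v ω then none else some (u ω) with he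
  have hem : Measurable e := by
    have : e = (fun q : ι × ι => if q.1 = q.2 then none else some q.1) ∘ fun ω => (u ω, v ω) := rfl
    rw [this]
    exact (measurable_of_finite _).comp (hu.prodMk hv)
  have hle : ent μ (fun ω => (u ω, v ω)) ≤ ent μ v + ent μ e := by
    refine ent_le_add_of_det μ (hu.prodMk hv) hv hem ?_
    intro a b h1 h2
    simp only [he] at h2
    by_cases ha : u a = v a <;> by_cases hb : u b = v b <;> simp_all
  have hmin : min δ₀ δ₁ / 2 < δ₀ ∧ min δ₀ δ₁ / 2 < δ₁ := by
    have := min_le_left δ₀ δ₁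
    have := min_le_right δ₀ δ₁
    have : 0 < min δ₀ δ₁ := by positivity
    constructor <;> linarith
  have hs : ∀ i, negMulLog (μ.real (e ⁻¹' {some i})) ≤ c := by
    intro i
    have h3 : μ.real (e ⁻¹' {some i}) ≤ μ.real {ω | u ω ≠ v ω} := by
      refine measureReal_mono fun ω hω => ?_
      simp only [he, mem_preimage, mem_singleton_iff] at hω
      by_contra hh
      simp only [mem_ofPred_eq, not_not] at hh
      simp [hh] at hω
    have h4 := h0 (x := μ.real (e ⁻¹' {some i})) (by
      rw [Real.dist_eq, sub_zero, abs_of_nonneg measureReal_nonneg]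
      linarith)
    rw [Real.dist_eq, Real.negMulLog_zero, sub_zero] at h4
    exact (le_abs_self _).trans h4.le
  have hn : negMulLog (μ.real (e ⁻¹' {none})) ≤ c := by
    have h3 : μ.real (e ⁻¹' {none}) = 1 - μ.real {ω | u ω ≠ v ω} := by
      rw [← probReal_compl_eq_one_sub]
      · congr 1
        ext ω
        simp only [he, mem_preimage, mem_singleton_iff, mem_compl_iff, mem_ofPred_eq, not_not]
        by_cases hh : u ω = v ω <;> simp [hh]
      · exact (hu.prodMk hv) ((Set.toFinite {q : ι × ι | q.1 ≠ q.2}).measurableSet)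
    have h5 : 0 ≤ μ.real {ω | u ω ≠ v ω} := measureReal_nonneg
    have h4 := h1 (x := μ.real (e ⁻¹' {none})) (by
      rw [Real.dist_eq, h3, abs_lt]
      constructor <;> linarith)
    rw [Real.dist_eq, Real.negMulLog_one, sub_zero] at h4
    exact (le_abs_self _).trans h4.le
  have : ent μ e ≤ ε := by
    calc ent μ e = negMulLog (μ.real (e ⁻¹' {none})) + ∑ i, negMulLog (μ.real (e ⁻¹' {some i})) := by
          unfold ent; rw [Fintype.sum_option]
      _ ≤ c + ∑ _i : ι, c := add_le_add hn (Finset.sum_le_sum fun i _ => hs i)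
      _ = ε := by
          simp only [Finset.sum_const, Finset.card_univ, nsmul_eq_mul, hc]
          field_simp
          ring
  unfold cent
  linarith

/-- `H(u | v)` as the average of the entropies of `u` in the cells of `v`. -/
lemma cent_eq_sum (μ : Measure Ω) [IsProbabilityMeasure μ] {u : Ω → ι} {v : Ω → κ}
    (hu : Measurable u) (hv : Measurable v) :
    cent μ u v = ∑ i, ∑ j, μ.real (v ⁻¹' {j})
      * negMulLog (μ.real (u ⁻¹' {i} ∩ v ⁻¹' {j}) / μ.real (v ⁻¹' {j})) := by
  have hset : ∀ i j, (fun ω => (u ω, v ω)) ⁻¹' {(i, j)} = u ⁻¹' {i} ∩ v ⁻¹' {j} := by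
    intro i j; ext ω; simp
  have h2 : ent μ v
      = ∑ i, ∑ j, μ.real (u ⁻¹' {i} ∩ v ⁻¹' {j}) * -Real.log (μ.real (v ⁻¹' {j})) := by
    have := ent_comp μ (hu.prodMk hv) (Prod.snd)
    simp only at this
    rw [this, Fintype.sum_prod_type]
    simp_rw [hset]
  unfold cent
  rw [h2]
  unfold ent
  rw [Fintype.sum_prod_type, ← Finset.sum_sub_distrib]
  refine Finset.sum_congr rfl fun i _ => ?_
  rw [← Finset.sum_sub_distrib]
  refine Finset.sum_congr rfl fun j _ => ?_
  rw [hset]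
  have h3 : μ.real (u ⁻¹' {i} ∩ v ⁻¹' {j}) ≤ μ.real (v ⁻¹' {j}) := measureReal_mono inter_subset_right
  have h4 : 0 ≤ μ.real (u ⁻¹' {i} ∩ v ⁻¹' {j}) := measureReal_nonneg
  set s := μ.real (u ⁻¹' {i} ∩ v ⁻¹' {j})
  set t := μ.real (v ⁻¹' {j})
  rcases h4.eq_or_lt with h | h
  · simp [← h]
  · have ht : 0 < t := h.trans_le h3
    rw [negMulLog, negMulLog, Real.log_div h.ne' ht.ne']
    field_simp
    ring

lemma ent_map {Ω' : Type*} [MeasurableSpace Ω'] (μ : Measure Ω) {T : Ω → Ω'} (hT : Measurable T)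
    {u : Ω' → ι} (hu : Measurable u) : ent (μ.map T) u = ent μ (fun ω => u (T ω)) := by
  unfold ent
  refine Finset.sum_congr rfl fun i _ => ?_
  rw [map_measureReal_apply hT (hu (measurableSet_singleton i))]
  rfl

end FiniteEntropy

/-! ### Conditional entropy given a σ-algebra -/

section CondEntropy

variable {Ω ι κ E : Type*} {m mΩ : MeasurableSpace Ω}
  [Fintype ι] [MeasurableSpace ι] [MeasurableSingletonClass ι]
  [Fintype κ] [MeasurableSpace κ] [MeasurableSingletonClass κ] [mE : MeasurableSpace E]

/-- `E[1_B g] = E[P(B | m) g]` for `g = -log P(B | m)`. Restricted to `m`, the measure `1_B μ` has density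
`P(B | m)` with respect to `μ`; arguing with densities avoids any integrability hypothesis on `g`. -/
lemma setIntegral_neg_log_condExp (μ : Measure Ω) [IsProbabilityMeasure μ] (hm : m ≤ mΩ)
    {B : Set Ω} (hB : MeasurableSet B) :
    ∫ x in B, -Real.log ((μ[B.indicator (fun _ => (1 : ℝ)) | m]) x) ∂μ
      = ∫ x, negMulLog ((μ[B.indicator (fun _ => (1 : ℝ)) | m]) x) ∂μ := by
  set p : Ω → ℝ := μ[B.indicator (fun _ => (1 : ℝ)) | m] with hp
  have hInt : Integrable (B.indicator (fun _ => (1 : ℝ))) μ :=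
    (integrable_const 1).indicator hB
  have hpm : StronglyMeasurable[m] p := stronglyMeasurable_condExp
  have hp0 : 0 ≤ᵐ[μ] p := condExp_nonneg (ae_of_all _ fun x => indicator_nonneg (by simp) x)
  have hpm' : Measurable[m] (fun x => (p x).toNNReal) := hpm.measurable.real_toNNReal
  have hρ : (μ.restrict B).trim hm
      = (μ.trim hm).withDensity (fun x => ((p x).toNNReal : ENNReal)) := by
    refine @Measure.ext _ m _ _ fun s hs => ?_
    rw [trim_measurableSet_eq hm hs, Measure.restrict_apply (hm s hs),
      @withDensity_apply _ m _ _ _ hs, restrict_trim hm _ hs, lintegral_trim hm]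
    · have h1 : ∫ x in s, p x ∂μ = μ.real (s ∩ B) := by
        rw [hp, setIntegral_condExp hm hInt hs, setIntegral_indicator hB]
        simp
      have h2 : ∫⁻ x in s, ((p x).toNNReal : ENNReal) ∂μ
          = ENNReal.ofReal (∫ x in s, p x ∂μ) := by
        rw [ofReal_integral_eq_lintegral_ofReal integrable_condExp.integrableOn
          (ae_restrict_of_ae hp0)]
        rfl
      rw [h2, h1, Measure.real, ENNReal.ofReal_toReal (measure_ne_top _ _)]
    · exact @Measurable.coe_nnreal_ennreal _ m _ hpm'
  have hg : StronglyMeasurable[m] (fun x => -Real.log (p x)) :=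
    (Real.measurable_log.comp hpm.measurable).neg.stronglyMeasurable
  have hg' : StronglyMeasurable[m] (fun x => (p x).toNNReal • (-Real.log (p x))) :=
    hpm'.stronglyMeasurable.smul hg
  rw [integral_trim hm hg, hρ, @integral_withDensity_eq_integral_smul _ _ m _ _ _ _ hpm',
    ← integral_trim hm hg']
  refine integral_congr_ae ?_
  filter_upwards [hp0] with x hx
  rw [NNReal.smul_def, Real.coe_toNNReal _ hx, negMulLog]
  simp

lemma condEntropyPart_eq (μ : Measure Ω) [IsProbabilityMeasure μ] (hm : m ≤ mΩ)
    {u : Ω → ι} (hu : Measurable u) :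
    condEntropyPart μ (fun i => u ⁻¹' {i}) m
      = ∑ i, ∫ x, negMulLog ((μ[(u ⁻¹' {i}).indicator (fun _ => (1 : ℝ)) | m]) x) ∂μ :=
  Finset.sum_congr rfl fun i _ =>
    setIntegral_neg_log_condExp μ hm (hu (measurableSet_singleton i))

lemma condExp_indicator_mem (μ : Measure Ω) [IsProbabilityMeasure μ] (hm : m ≤ mΩ)
    {B : Set Ω} (hB : MeasurableSet B) :
    ∀ᵐ x ∂μ, (μ[B.indicator (fun _ => (1 : ℝ)) | m]) x ∈ Icc (0 : ℝ) 1 := by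
  have hInt : Integrable (B.indicator (fun _ => (1 : ℝ))) μ :=
    (integrable_const 1).indicator hB
  have hp0 : 0 ≤ᵐ[μ] μ[B.indicator (fun _ => (1 : ℝ)) | m] :=
    condExp_nonneg (ae_of_all _ fun x => indicator_nonneg (by simp) x)
  have hp1 : μ[B.indicator (fun _ => (1 : ℝ)) | m] ≤ᵐ[μ] μ[(fun _ => (1 : ℝ)) | m] :=
    condExp_mono hInt (integrable_const 1)
      (ae_of_all _ fun x => indicator_le_self' (by simp) x)
  rw [condExp_const hm] at hp1
  filter_upwards [hp0, hp1] with x h0 h1 using ⟨h0, h1⟩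

lemma integrable_negMulLog_of_mem (μ : Measure Ω) [IsProbabilityMeasure μ] {p : Ω → ℝ}
    (hp : AEStronglyMeasurable p μ) (h : ∀ᵐ x ∂μ, p x ∈ Icc (0 : ℝ) 1) :
    Integrable (fun x => negMulLog (p x)) μ := by
  refine Integrable.of_bound (Real.continuous_negMulLog.comp_aestronglyMeasurable hp) 1 ?_
  filter_upwards [h] with x hx
  rw [Real.norm_eq_abs, abs_of_nonneg (Real.negMulLog_nonneg hx.1 hx.2)]
  have := Real.negMulLog_le_one_sub_self hx.1
  linarith [hx.1]

lemma integral_eq_sum_fibres (μ : Measure Ω) {v : Ω → κ} (hv : Measurable v) {g : Ω → ℝ}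
    (hg : Integrable g μ) : ∫ x, g x ∂μ = ∑ j, ∫ x in v ⁻¹' {j}, g x ∂μ := by
  rw [← integral_biUnion_finset]
  · have : (⋃ i ∈ (Finset.univ : Finset κ), v ⁻¹' {i}) = univ := by ext; simp
    rw [this, setIntegral_univ]
  · exact fun j _ => hv (measurableSet_singleton j)
  · intro i _ j _ hij
    rw [Function.onFun, Set.disjoint_left]
    intro ω h1 h2
    exact hij (h1.symm.trans h2)
  · exact fun j _ => hg.integrableOn

/-- Conditioning on a σ-algebra gives less entropy than conditioning on any finite partition
measurable with respect to it (Jensen's inequality on each cell). -/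
lemma condEntropyPart_le_cent (μ : Measure Ω) [IsProbabilityMeasure μ] (hm : m ≤ mΩ)
    {u : Ω → ι} (hu : Measurable u) {v : Ω → κ} (hv : Measurable[m] v) :
    condEntropyPart μ (fun i => u ⁻¹' {i}) m ≤ cent μ u v := by
  have hv' : Measurable v := hv.mono hm le_rfl
  rw [condEntropyPart_eq μ hm hu, cent_eq_sum μ hu hv']
  refine Finset.sum_le_sum fun i _ => ?_
  have hB := hu (measurableSet_singleton i)
  have hInt : Integrable ((u ⁻¹' {i}).indicator (fun _ => (1 : ℝ))) μ :=
    (integrable_const 1).indicator hB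
  have hmem := condExp_indicator_mem μ hm hB
  have hi := integrable_negMulLog_of_mem μ integrable_condExp.aestronglyMeasurable hmem
  rw [integral_eq_sum_fibres μ hv' hi]
  refine Finset.sum_le_sum fun j _ => ?_
  have hCm : MeasurableSet[m] (v ⁻¹' {j}) := hv (measurableSet_singleton j)
  rcases eq_or_ne (μ (v ⁻¹' {j})) 0 with h0 | h0
  · rw [Measure.restrict_eq_zero.2 h0]
    simp [Measure.real, h0]
  · have hJ := ConcaveOn.le_map_set_average (μ := μ) (t := v ⁻¹' {j})
      (f := μ[(u ⁻¹' {i}).indicator (fun _ => (1 : ℝ)) | m]) Real.concaveOn_negMulLog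
      Real.continuous_negMulLog.continuousOn isClosed_Ici h0 (measure_ne_top _ _)
      (ae_restrict_of_ae (hmem.mono fun x hx => hx.1)) integrable_condExp.integrableOn
      hi.integrableOn
    rw [setAverage_eq, setAverage_eq, setIntegral_condExp hm hInt hCm,
      setIntegral_indicator hB] at hJ
    have hpos : 0 < μ.real (v ⁻¹' {j}) := (measureReal_nonneg).lt_of_ne'
      (by simpa [Measure.real, ENNReal.toReal_eq_zero_iff] using h0)
    simp only [smul_eq_mul, integral_const, measureReal_restrict_apply_univ, mul_one] at hJ
    rw [inv_mul_le_iff₀ hpos, inter_comm, inv_mul_eq_div] at hJ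
    exact hJ

/-- The conditional entropy given the σ-algebra of a random variable `X` is approximated by the
conditional entropies given finite partitions of the range of `X`: the partition according to
the rounded values of the conditional probabilities does it. -/
lemma exists_cent_le_condEntropyPart [DecidableEq ι] (μ : Measure Ω) [IsProbabilityMeasure μ]
    {X : Ω → E} (hX : Measurable X) (hmX : m = MeasurableSpace.comap X mE)
    {u : Ω → ι} (hu : Measurable u) {ε : ℝ} (hε : 0 < ε) :
    ∃ (n : ℕ) (z : E → ι → Fin (n + 1)), Measurable z ∧
      cent μ u (fun ω => z (X ω))
        ≤ condEntropyPart μ (fun i => u ⁻¹' {i}) m + ε := by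
  have hm : m ≤ mΩ := hmX ▸ hX.comap_le
  have hXm : Measurable[m] X := hmX ▸ comap_measurable X
  set c : ℝ := ε / (Fintype.card ι + 1) with hc
  have hc0 : 0 < c := by positivity
  have huc : UniformContinuousOn negMulLog (Icc 0 1) :=
    isCompact_Icc.uniformContinuousOn_of_continuous Real.continuous_negMulLog.continuousOn
  obtain ⟨δ, hδ, hδ'⟩ := Metric.uniformContinuousOn_iff.1 huc c hc0
  obtain ⟨n, hn⟩ := exists_nat_one_div_lt hδ
  have hq : ∀ i, ∃ q : E → ℝ, Measurable q ∧
      (μ[(u ⁻¹' {i}).indicator (fun _ => (1 : ℝ)) | m]) = q ∘ X := by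
    intro i
    have h1 : Measurable[m] (μ[(u ⁻¹' {i}).indicator (fun _ => (1 : ℝ)) | m]) :=
      stronglyMeasurable_condExp.measurable
    subst hmX
    exact h1.exists_eq_measurable_comp
  choose q hqm hq using hq
  set z : E → ι → Fin (n + 1 + 1) := fun x i =>
    ⟨min (⌊((n + 1 : ℕ) : ℝ) * q i x⌋₊) (n + 1), by omega⟩ with hz
  have hzm : Measurable z := by
    refine measurable_pi_lambda _ fun i => ?_
    have h1 : Measurable fun x => min (⌊((n + 1 : ℕ) : ℝ) * q i x⌋₊) (n + 1) :=
      (Nat.measurable_floor.comp ((hqm i).const_mul _)).min measurable_const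
    have h2 : (fun x => z x i) = (fun k : ℕ => (⟨min k (n + 1), by omega⟩ : Fin (n + 1 + 1))) ∘
        fun x => ⌊((n + 1 : ℕ) : ℝ) * q i x⌋₊ := rfl
    rw [h2]
    exact (measurable_from_nat).comp (Nat.measurable_floor.comp ((hqm i).const_mul _))
  refine ⟨n + 1, z, hzm, ?_⟩
  set v : Ω → ι → Fin (n + 1 + 1) := fun ω => z (X ω) with hv
  have hvm : Measurable[m] v := hzm.comp hXm
  have hvm' : Measurable v := hzm.comp hX
  rw [condEntropyPart_eq μ hm hu, cent_eq_sum μ hu hvm']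
  have hkey : ∀ i, ∑ j, μ.real (v ⁻¹' {j}) * negMulLog (μ.real (u ⁻¹' {i} ∩ v ⁻¹' {j})
      / μ.real (v ⁻¹' {j}))
      ≤ ∫ x, negMulLog ((μ[(u ⁻¹' {i}).indicator (fun _ => (1 : ℝ)) | m]) x) ∂μ + c := by
    intro i
    have hB := hu (measurableSet_singleton i)
    have hInt : Integrable ((u ⁻¹' {i}).indicator (fun _ => (1 : ℝ))) μ :=
      (integrable_const 1).indicator hB
    have hmem := condExp_indicator_mem μ hm hB
    have hi := integrable_negMulLog_of_mem μ integrable_condExp.aestronglyMeasurable hmem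
    rw [integral_eq_sum_fibres μ hvm' hi]
    have hc1 : c = ∑ j, μ.real (v ⁻¹' {j}) * c := by
      rw [← Finset.sum_mul, sum_fibre_eq_one μ hvm', one_mul]
    rw [hc1, ← Finset.sum_add_distrib]
    refine Finset.sum_le_sum fun j _ => ?_
    have hCm : MeasurableSet[m] (v ⁻¹' {j}) := hvm (measurableSet_singleton j)
    have hC : MeasurableSet (v ⁻¹' {j}) := hm _ hCm
    rcases eq_or_ne (μ (v ⁻¹' {j})) 0 with h0 | h0
    · rw [Measure.restrict_eq_zero.2 h0]
      simp [Measure.real, h0]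
    have hpos : 0 < μ.real (v ⁻¹' {j}) := (measureReal_nonneg).lt_of_ne'
      (by simpa [Measure.real, ENNReal.toReal_eq_zero_iff] using h0)
    set t := μ.real (v ⁻¹' {j}) with ht
    set a : ℝ := μ.real (u ⁻¹' {i} ∩ v ⁻¹' {j}) / t with ha
    have ha01 : a ∈ Icc (0 : ℝ) 1 :=
      ⟨by positivity, (div_le_one hpos).2 (measureReal_mono inter_subset_right)⟩
    set p : Ω → ℝ := μ[(u ⁻¹' {i}).indicator (fun _ => (1 : ℝ)) | m] with hp
    have hpint : ∫ x in v ⁻¹' {j}, p x ∂μ = t * a := by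
      rw [hp, setIntegral_condExp hm hInt hCm, setIntegral_indicator hB, inter_comm]
      simp only [integral_const, measureReal_restrict_apply_univ, smul_eq_mul, mul_one, ha]
      field_simp
    -- on the cell, the conditional probability lies in an interval of length `1 / (n + 1)`
    set lo : ℝ := ((j i : ℕ) : ℝ) / ((n + 1 : ℕ) : ℝ) with hlo
    have hn1 : (0 : ℝ) < ((n + 1 : ℕ) : ℝ) := by positivity
    have hrange : ∀ᵐ x ∂(μ.restrict (v ⁻¹' {j})), lo ≤ p x ∧ p x ≤ lo + 1 / ((n + 1 : ℕ) : ℝ)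
        ∧ p x ∈ Icc (0 : ℝ) 1 := by
      filter_upwards [ae_restrict_of_ae hmem, ae_restrict_mem hC] with x hx hxj
      have hji : (j i : ℕ) = min (⌊((n + 1 : ℕ) : ℝ) * p x⌋₊) (n + 1) := by
        have : v x = j := hxj
        have hpx : p x = q i (X x) := congrFun (hp.trans (hq i)) x
        rw [← this, hpx]
      have hle : ⌊((n + 1 : ℕ) : ℝ) * p x⌋₊ ≤ n + 1 := by
        have : ((n + 1 : ℕ) : ℝ) * p x ≤ ((n + 1 : ℕ) : ℝ) := mul_le_of_le_one_right hn1.le hx.2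
        exact (Nat.floor_le_floor this).trans (Nat.floor_natCast _).le
      rw [min_eq_left hle] at hji
      have h1 := Nat.floor_le (mul_nonneg hn1.le hx.1)
      have h2 := Nat.lt_floor_add_one (((n + 1 : ℕ) : ℝ) * p x)
      rw [← hji] at h1 h2
      refine ⟨?_, ?_, hx⟩
      · rw [hlo, div_le_iff₀ hn1]; linarith
      · rw [hlo, ← add_div, le_div_iff₀ hn1]; linarith
    have hpi : IntegrableOn p (v ⁻¹' {j}) μ := integrable_condExp.integrableOn
    have hconst : ∀ r : ℝ, ∫ _x in v ⁻¹' {j}, r ∂μ = t * r := by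
      intro r; simp [ht]
    have hla : lo ≤ a := by
      have := integral_mono_ae (integrable_const lo) hpi (hrange.mono fun x hx => hx.1)
      rw [hconst, hpint] at this
      exact le_of_mul_le_mul_left this hpos
    have hal : a ≤ lo + 1 / ((n + 1 : ℕ) : ℝ) := by
      have := integral_mono_ae hpi (integrable_const (lo + 1 / ((n + 1 : ℕ) : ℝ)))
        (hrange.mono fun x hx => hx.2.1)
      rw [hconst, hpint] at this
      exact le_of_mul_le_mul_left this hpos
    have hfin : t * (negMulLog a - c) ≤ ∫ x in v ⁻¹' {j}, negMulLog (p x) ∂μ := by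
      rw [← hconst]
      refine integral_mono_ae (integrable_const _) hi.integrableOn ?_
      filter_upwards [hrange] with x hx
      have hd : dist a (p x) < δ := by
        refine lt_of_le_of_lt ?_ hn
        rw [Real.dist_eq, abs_le]
        push_cast at *
        constructor <;> linarith [hx.1, hx.2.1]
      have := hδ' a ha01 (p x) hx.2.2 hd
      rw [Real.dist_eq] at this
      have := (abs_lt.1 this).2
      linarith
    linarith
  calc _ ≤ ∑ i, (∫ x, negMulLog ((μ[(u ⁻¹' {i}).indicator (fun _ => (1 : ℝ)) | m]) x) ∂μ + c) :=
        Finset.sum_le_sum fun i _ => hkey i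
    _ ≤ _ := by
        rw [Finset.sum_add_distrib]
        gcongr
        simp only [Finset.sum_const, Finset.card_univ, nsmul_eq_mul, hc]
        rw [mul_div_assoc', div_le_iff₀ (by positivity)]
        nlinarith

end CondEntropy

/-! ### Approximation by fine partitions -/

section Approx

variable {Ω ι κ E : Type*} [MeasurableSpace Ω]
  [Fintype ι] [MeasurableSpace ι] [MeasurableSingletonClass ι]
  [Fintype κ] [MeasurableSpace κ] [MeasurableSingletonClass κ]
  [MetricSpace E] [CompleteSpace E] [SecondCountableTopology E]
  [mE : MeasurableSpace E] [BorelSpace E]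
  {T : ℕ → Type*} [∀ N, Fintype (T N)] [∀ N, MeasurableSpace (T N)]
  [∀ N, MeasurableSingletonClass (T N)]

/-- A sequence of finite Borel partitions `D N` of `E` whose cells, restricted to `K`, have
diameters tending to `0`. The partitions need not be nested. -/
structure FinePartitions (K : Set E) (D : ∀ N, E → T N) : Prop where
  measurable : ∀ N, Measurable (D N)
  fine : ∀ δ > 0, ∀ᶠ N in atTop, ∀ x ∈ K, ∀ y ∈ K, D N x = D N y → dist x y < δ

/-- Every finite Borel partition is asymptotically determined, up to small entropy, by a fine
sequence of partitions: approximate its cells from inside by compact sets, which are a positive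
distance apart. -/
lemma FinePartitions.tendsto_cent_zero {K : Set E} {D : ∀ N, E → T N} (hD : FinePartitions K D)
    (μ : Measure Ω) [IsProbabilityMeasure μ] {X : Ω → E} (hX : Measurable X) (hXK : ∀ ω, X ω ∈ K)
    {z : E → ι} (hz : Measurable z) :
    Tendsto (fun N => cent μ (fun ω => z (X ω)) (fun ω => D N (X ω))) atTop (nhds 0) := by
  classical
  have hDX : ∀ N, Measurable fun ω => D N (X ω) := fun N => (hD.measurable N).comp hX
  have hzX : Measurable fun ω => z (X ω) := hz.comp hX
  rw [Metric.tendsto_nhds]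
  intro ε hε
  obtain ⟨δ, hδ, hfano⟩ := exists_cent_le ι (half_pos hε)
  have : Nonempty Ω := nonempty_of_isProbabilityMeasure μ
  have hι : Nonempty ι := ⟨z (X (Classical.arbitrary Ω))⟩
  set P := μ.map X with hP
  have hPp : IsProbabilityMeasure P := Measure.isProbabilityMeasure_map hX.aemeasurable
  set η : ℝ := δ / Fintype.card ι with hη
  have hcard : (0 : ℝ) < Fintype.card ι := by exact_mod_cast Fintype.card_pos
  have hη0 : 0 < η := by positivity
  have hC : ∀ i, ∃ C ⊆ z ⁻¹' {i}, IsCompact C ∧ P (z ⁻¹' {i} \ C) < ENNReal.ofReal η := fun i =>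
    (hz (measurableSet_singleton i)).exists_isCompact_sdiff_lt (measure_ne_top _ _)
      (by simpa using hη0)
  choose C hCz hCc hCP using hC
  have hsep : ∀ i j, i ≠ j → ∀ᶠ N in atTop, ∀ x ∈ C i ∩ K, ∀ y ∈ C j ∩ K, D N x ≠ D N y := by
    intro i j hij
    have hdis : Disjoint (C i) (C j) := by
      rw [Set.disjoint_left]
      intro x h1 h2
      exact hij ((hCz i h1).symm.trans (hCz j h2))
    obtain ⟨r, hr, hr'⟩ := Metric.exists_pos_forall_lt_edist (hCc i) (hCc j).isClosed hdis
    filter_upwards [hD.fine r (by exact_mod_cast hr)] with N hN x hx y hy hxy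
    have h1 := hN x hx.2 y hy.2 hxy
    have h2 := hr' x hx.1 y hy.1
    rw [edist_dist, ENNReal.lt_ofReal_iff_toReal_lt (by simp)] at h2
    simp at h2
    linarith
  have hsep' : ∀ᶠ N in atTop, ∀ i j, i ≠ j → ∀ x ∈ C i ∩ K, ∀ y ∈ C j ∩ K, D N x ≠ D N y := by
    rw [eventually_all]; intro i
    rw [eventually_all]; intro j
    by_cases hij : i = j
    · simp [hij]
    · simpa [hij] using hsep i j hij
  filter_upwards [hsep'] with N hN
  -- `g` guesses `z (X ω)` from the cell of `X ω`; it is right as soon as `X ω` lies in some `C i`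
  set g : T N → ι := fun c =>
    if h : ∃ i, ∃ x ∈ C i ∩ K, D N x = c then h.choose else Classical.arbitrary ι with hg
  have hgm : Measurable fun ω => g (D N (X ω)) := (measurable_of_finite g).comp (hDX N)
  have hgood : ∀ ω i, X ω ∈ C i → g (D N (X ω)) = i := by
    intro ω i hi
    have h : ∃ i, ∃ x ∈ C i ∩ K, D N x = D N (X ω) := ⟨i, X ω, ⟨hi, hXK ω⟩, rfl⟩
    have : g (D N (X ω)) = h.choose := by simp only [hg]; rw [dif_pos h]
    rw [this]
    obtain ⟨x, hx, hxD⟩ := h.choose_spec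
    by_contra hne
    exact hN _ _ hne x hx (X ω) ⟨hi, hXK ω⟩ hxD
  have hbad : μ.real {ω | z (X ω) ≠ g (D N (X ω))} ≤ δ := by
    have hsub : {ω | z (X ω) ≠ g (D N (X ω))} ⊆ ⋃ i, X ⁻¹' (z ⁻¹' {i} \ C i) := by
      intro ω hω
      refine mem_iUnion.2 ⟨z (X ω), rfl, fun hc => hω (hgood ω _ hc).symm⟩
    calc μ.real {ω | z (X ω) ≠ g (D N (X ω))} ≤ μ.real (⋃ i, X ⁻¹' (z ⁻¹' {i} \ C i)) :=
          measureReal_mono hsub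
      _ ≤ ∑ i, μ.real (X ⁻¹' (z ⁻¹' {i} \ C i)) := measureReal_iUnion_fintype_le _
      _ ≤ ∑ _i : ι, η := by
          refine Finset.sum_le_sum fun i _ => ?_
          have := hCP i
          rw [hP, Measure.map_apply hX
            ((hz (measurableSet_singleton i)).diff (hCc i).measurableSet)] at this
          exact ENNReal.toReal_le_of_le_ofReal hη0.le this.le
      _ = δ := by
          simp only [Finset.sum_const, Finset.card_univ, nsmul_eq_mul, hη]
          field_simp
  have h1 := hfano μ _ _ hzX hgm hbad
  have h2 := cent_anti μ hzX (hDX N) hgm (fun a b hab => by simp only [hab])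
  have h3 := cent_nonneg μ hzX (hDX N)
  rw [Real.dist_eq, sub_zero, abs_of_nonneg h3]
  linarith

/-- The conditional entropy given (the σ-algebra of) `X` is the limit of the conditional entropies
given the partitions `D N` of the range of `X`. -/
lemma FinePartitions.tendsto_cent [DecidableEq ι] {K : Set E} {D : ∀ N, E → T N}
    (hD : FinePartitions K D)
    (μ : Measure Ω) [IsProbabilityMeasure μ] {X : Ω → E} (hX : Measurable X) (hXK : ∀ ω, X ω ∈ K)
    {u : Ω → ι} (hu : Measurable u) :
    Tendsto (fun N => cent μ u (fun ω => D N (X ω))) atTop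
      (nhds (condEntropyPart μ (fun i => u ⁻¹' {i}) (MeasurableSpace.comap X mE))) := by
  have hDX : ∀ N, Measurable fun ω => D N (X ω) := fun N => (hD.measurable N).comp hX
  rw [Metric.tendsto_nhds]
  intro ε hε
  obtain ⟨n, z, hz, hzle⟩ := exists_cent_le_condEntropyPart μ hX rfl hu (half_pos hε)
  have h0 := (Metric.tendsto_nhds.1 (hD.tendsto_cent_zero μ hX hXK hz)) (ε / 2) (half_pos hε)
  filter_upwards [h0] with N hN
  have h1 := condEntropyPart_le_cent μ hX.comap_le hu
    (v := fun ω => D N (X ω)) ((hD.measurable N).comp (comap_measurable X))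
  have h2 := cent_triangle μ hu (hz.comp hX) (hDX N)
  simp only [Function.comp_def] at h2
  rw [Real.dist_eq, sub_zero] at hN
  have h3 := (abs_lt.1 hN).2
  rw [Real.dist_eq, abs_of_nonneg (by linarith)]
  linarith

/-- Conditional entropy of a finite partition, labelled by `u`, given the random variable `X`. -/
def hc (μ : Measure Ω) (u : Ω → ι) (X : Ω → E) : ℝ :=
  condEntropyPart μ (fun i => u ⁻¹' {i}) (MeasurableSpace.comap X mE)

lemma hc_le_cent (μ : Measure Ω) [IsProbabilityMeasure μ] {X : Ω → E} (hX : Measurable X)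
    {u : Ω → ι} (hu : Measurable u) {z : E → κ} (hz : Measurable z) :
    hc μ u X ≤ cent μ u (fun ω => z (X ω)) :=
  condEntropyPart_le_cent μ hX.comap_le hu (hz.comp (comap_measurable X))

/-- If `Y = G (v, X)`, then `H(u | v, X) ≤ H(u | v, Y)`; here both sides are expanded by the chain
rule. -/
lemma FinePartitions.hc_pair_sub_le [DecidableEq ι] [DecidableEq κ] {K : Set E}
    {D : ∀ N, E → T N} (hD : FinePartitions K D)
    (μ : Measure Ω) [IsProbabilityMeasure μ] {X Y : Ω → E} (hX : Measurable X)
    (hXK : ∀ ω, X ω ∈ K) (hY : Measurable Y) (hYK : ∀ ω, Y ω ∈ K)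
    {u : Ω → ι} (hu : Measurable u) {v : Ω → κ} (hv : Measurable v)
    {G : κ → E → E} (hG : ∀ k, Measurable (G k)) (hGY : ∀ ω, Y ω = G (v ω) (X ω)) :
    hc μ (fun ω => (u ω, v ω)) X - hc μ v X ≤ hc μ (fun ω => (u ω, v ω)) Y - hc μ v Y := by
  have hDX : ∀ N, Measurable fun ω => D N (X ω) := fun N => (hD.measurable N).comp hX
  have hDY : ∀ N, Measurable fun ω => D N (Y ω) := fun N => (hD.measurable N).comp hY
  -- the chain rule at the level of finite partitions
  have hch : ∀ {τ : Type _} [Fintype τ] [MeasurableSpace τ] [MeasurableSingletonClass τ]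
      (w : Ω → τ), Measurable w → cent μ (fun ω => (u ω, v ω)) w - cent μ v w
        = cent μ u (fun ω => (v ω, w ω)) := by
    intro τ _ _ _ w hw
    have := ent_congr μ ((hu.prodMk hv).prodMk hw) (hu.prodMk (hv.prodMk hw)) (by
      intro a b; simp only [Prod.mk.injEq]; tauto)
    unfold cent
    rw [this]; ring
  have hLX := (hD.tendsto_cent μ hX hXK (hu.prodMk hv)).sub (hD.tendsto_cent μ hX hXK hv)
  have hLY := (hD.tendsto_cent μ hY hYK (hu.prodMk hv)).sub (hD.tendsto_cent μ hY hYK hv)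
  refine ge_of_tendsto' hLY fun N => ?_
  rw [hch _ (hDY N)]
  -- `z x` lists the cell of `Y` for every possible value of `v`, as a function of `X = x`
  set z : E → κ → T N := fun x k => D N (G k x) with hz
  have hzm : Measurable z := measurable_pi_lambda _ fun k => (hD.measurable N).comp (hG k)
  have h0 := hD.tendsto_cent_zero μ hX hXK hzm
  have h1 := h0.const_add (cent μ u (fun ω => (v ω, D N (Y ω))))
  rw [add_zero] at h1
  refine le_of_tendsto_of_tendsto' hLX h1 fun M => ?_
  rw [hch _ (hDX M)]
  have hzX : Measurable fun ω => z (X ω) := hzm.comp hX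
  have e1 := cent_anti μ hu (hv.prodMk hzX) (hv.prodMk (hDY N)) (by
    intro a b hab
    simp only [Prod.mk.injEq] at hab ⊢
    refine ⟨hab.1, ?_⟩
    rw [hGY a, hGY b, hab.1]
    exact congrFun hab.2 (v b))
  have e2 := cent_triangle μ hu (hv.prodMk hzX) (hv.prodMk (hDX M))
  -- `H(v, z | v, D) ≤ H(z | D)`
  have e3 : cent μ (fun ω => (v ω, z (X ω))) (fun ω => (v ω, D M (X ω)))
      ≤ cent μ (fun ω => z (X ω)) (fun ω => D M (X ω)) := by
    have f1 := cent_anti μ hzX (hv.prodMk (hDX M)) (hDX M) (by simp)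
    have f2 := ent_congr μ (hzX.prodMk (hv.prodMk (hDX M)))
      ((hv.prodMk hzX).prodMk (hv.prodMk (hDX M))) (by
        intro a b; simp only [Prod.mk.injEq]; tauto)
    unfold cent at *
    rw [f2]
    exact f1
  linarith

/-- If `X` and `Y` determine each other given `v`, then `H(u | v, X) = H(u | v, Y)`. -/
lemma FinePartitions.hc_pair_sub_eq [DecidableEq ι] [DecidableEq κ] {K : Set E}
    {D : ∀ N, E → T N} (hD : FinePartitions K D)
    (μ : Measure Ω) [IsProbabilityMeasure μ] {X Y : Ω → E} (hX : Measurable X)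
    (hXK : ∀ ω, X ω ∈ K) (hY : Measurable Y) (hYK : ∀ ω, Y ω ∈ K)
    {u : Ω → ι} (hu : Measurable u) {v : Ω → κ} (hv : Measurable v)
    {G : κ → E → E} (hG : ∀ k, Measurable (G k)) (hGY : ∀ ω, Y ω = G (v ω) (X ω))
    {G' : κ → E → E} (hG' : ∀ k, Measurable (G' k)) (hGX : ∀ ω, X ω = G' (v ω) (Y ω)) :
    hc μ (fun ω => (u ω, v ω)) X - hc μ v X = hc μ (fun ω => (u ω, v ω)) Y - hc μ v Y :=
  le_antisymm (hD.hc_pair_sub_le μ hX hXK hY hYK hu hv hG hGY)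
    (hD.hc_pair_sub_le μ hY hYK hX hXK hu hv hG' hGX)

/-- Conditional entropy depends on the partition only, not on its labels. -/
lemma FinePartitions.hc_congr [DecidableEq ι] [DecidableEq κ] {K : Set E}
    {D : ∀ N, E → T N} (hD : FinePartitions K D)
    (μ : Measure Ω) [IsProbabilityMeasure μ] {X : Ω → E} (hX : Measurable X)
    (hXK : ∀ ω, X ω ∈ K) {u : Ω → ι} (hu : Measurable u) {v : Ω → κ} (hv : Measurable v)
    (h : ∀ a b, u a = u b ↔ v a = v b) : hc μ u X = hc μ v X := by
  refine tendsto_nhds_unique (hD.tendsto_cent μ hX hXK hu) ?_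
  refine (hD.tendsto_cent μ hX hXK hv).congr fun N => ?_
  have hDX : Measurable fun ω => D N (X ω) := (hD.measurable N).comp hX
  unfold cent
  rw [ent_congr μ (hu.prodMk hDX) (hv.prodMk hDX) (by
    intro a b; simp only [Prod.mk.injEq, h a b])]

lemma FinePartitions.hc_map [DecidableEq ι] {Ω' : Type*} [MeasurableSpace Ω'] {K : Set E}
    {D : ∀ N, E → T N} (hD : FinePartitions K D)
    (μ : Measure Ω) [IsProbabilityMeasure μ] {S : Ω → Ω'} (hS : Measurable S)
    {X : Ω' → E} (hX : Measurable X)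
    (hXK : ∀ ω, X ω ∈ K) {u : Ω' → ι} (hu : Measurable u) :
    hc (μ.map S) u X = hc μ (fun ω => u (S ω)) (fun ω => X (S ω)) := by
  have : IsProbabilityMeasure (μ.map S) := Measure.isProbabilityMeasure_map hS.aemeasurable
  refine tendsto_nhds_unique (hD.tendsto_cent (μ.map S) hX hXK hu) ?_
  refine (hD.tendsto_cent μ (hX.comp hS) (fun ω => hXK (S ω)) (hu.comp hS)).congr fun N => ?_
  have hDX : Measurable fun ω => D N (X ω) := (hD.measurable N).comp hX
  unfold cent
  rw [ent_map μ hS (hu.prodMk hDX), ent_map μ hS hDX]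
  rfl

end Approx

/-! ### Block entropy -/

section Dynamics

lemma shift_iterate {l : ℕ} (k : ℕ) (x : Sig l) : shift^[k] x = fun n => x (n + k) := by
  induction k generalizing x with
  | zero => rfl
  | succ k ih =>
    rw [Function.iterate_succ_apply, ih]
    funext n
    simp only [shift]
    congr 1

lemma measurable_shift {l : ℕ} : Measurable (shift : Sig l → Sig l) :=
  measurable_pi_lambda _ fun n => measurable_pi_apply (n + 1)

lemma measurable_shift_iterate {l : ℕ} (k : ℕ) : Measurable (shift^[k] : Sig l → Sig l) :=
  measurable_shift.iterate k

/-- The word formed by the first `k` letters. -/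
def word {l : ℕ} (k : ℕ) (x : Sig l) : Fin k → Fin l := fun i => x i

lemma measurable_word {l : ℕ} (k : ℕ) : Measurable (word k : Sig l → _) :=
  measurable_pi_lambda _ fun i => measurable_pi_apply (i : ℕ)

lemma word_succ_iff {l : ℕ} (k : ℕ) (x y : Sig l) :
    word (k + 1) x = word (k + 1) y ↔ word k x = word k y ∧ x k = y k := by
  simp only [word, funext_iff, Fin.forall_fin_succ', Fin.val_castSucc, Fin.val_last]

variable {l : ℕ} {E : Type*}
  [MetricSpace E] [CompleteSpace E] [SecondCountableTopology E]
  [mE : MeasurableSpace E] [BorelSpace E]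
  {T : ℕ → Type*} [∀ N, Fintype (T N)] [∀ N, MeasurableSpace (T N)]
  [∀ N, MeasurableSingletonClass (T N)]

/-- A measurable coding map `π` of points of `K` for a system of Borel automorphisms `S i`
with inverses `S' i`. -/
structure IsCoding (S S' : Fin l → E → E) (K : Set E) (π : Sig l → E) : Prop where
  measurable : Measurable π
  mem : ∀ x, π x ∈ K
  measurable_S : ∀ i, Measurable (S i)
  measurable_S' : ∀ i, Measurable (S' i)
  eq : ∀ x, π x = S (x 0) (π (shift x))
  eq' : ∀ x, π (shift x) = S' (x 0) (π x)

variable {S S' : Fin l → E → E} {K : Set E} {π : Sig l → E}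

lemma IsCoding.measurable_comp (hπ : IsCoding S S' K π) (k : ℕ) :
    Measurable fun x => π (shift^[k] x) := hπ.measurable.comp (measurable_shift_iterate k)

/-- Given the first `k` letters of `x`, the point `π (σ^k x)` determines `π x`. -/
lemma IsCoding.exists_forward (hπ : IsCoding S S' K π) (k : ℕ) :
    ∃ G : (Fin k → Fin l) → E → E, (∀ w, Measurable (G w)) ∧
      ∀ x, π x = G (word k x) (π (shift^[k] x)) := by
  induction k with
  | zero => exact ⟨fun _ y => y, fun _ => measurable_id, fun x => rfl⟩
  | succ k ih =>
    obtain ⟨G, hG, hGx⟩ := ih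
    refine ⟨fun w y => G (fun i => w i.castSucc) (S (w (Fin.last k)) y),
      fun w => (hG _).comp (hπ.measurable_S _), fun x => ?_⟩
    rw [hGx x, hπ.eq (shift^[k] x), ← Function.iterate_succ_apply' shift]
    have : shift^[k] x 0 = x k := by rw [shift_iterate]; simp
    rw [this]
    rfl

/-- Given the first `k` letters of `x`, the point `π x` determines `π (σ^k x)`. -/
lemma IsCoding.exists_backward (hπ : IsCoding S S' K π) (k : ℕ) :
    ∃ G : (Fin k → Fin l) → E → E, (∀ w, Measurable (G w)) ∧
      ∀ x, π (shift^[k] x) = G (word k x) (π x) := by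
  induction k with
  | zero => exact ⟨fun _ y => y, fun _ => measurable_id, fun x => rfl⟩
  | succ k ih =>
    obtain ⟨G, hG, hGx⟩ := ih
    refine ⟨fun w y => S' (w (Fin.last k)) (G (fun i => w i.castSucc) y),
      fun w => (hπ.measurable_S' _).comp (hG _), fun x => ?_⟩
    rw [Function.iterate_succ_apply' shift, hπ.eq', hGx x]
    have : shift^[k] x 0 = x k := by rw [shift_iterate]; simp
    rw [this]
    rfl

/-- The projection entropy of the `k`-th iterate of the shift with respect to a measure which
need not be invariant. -/
def blockEnt (π : Sig l → E) (k : ℕ) (ν : Measure (Sig l)) : ℝ :=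
  hc ν (word k) (fun x => π (shift^[k] x)) - hc ν (word k) π

/-- The projection entropy of a shifted measure, expressed on the original space. -/
lemma IsCoding.projEntropy_map (hπ : IsCoding S S' K π) {D : ∀ N, E → T N}
    (hD : FinePartitions K D) (ν : Measure (Sig l)) [IsProbabilityMeasure ν] (k : ℕ) :
    projEntropy π (ν.map shift^[k])
      = hc ν (fun x => x k) (fun x => π (shift^[k + 1] x))
        - hc ν (fun x => x k) (fun x => π (shift^[k] x)) := by
  have h0 : Measurable fun x : Sig l => x 0 := measurable_pi_apply 0
  have h1 := hD.hc_map ν (measurable_shift_iterate k) (hπ.measurable.comp measurable_shift)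
    (fun x => hπ.mem _) h0
  have h2 := hD.hc_map ν (measurable_shift_iterate k) hπ.measurable hπ.mem h0
  have h3 : (fun x : Sig l => shift^[k] x 0) = fun x => x k := by
    funext x; rw [shift_iterate]; simp
  rw [h3] at h1 h2
  have h4 : (fun x : Sig l => (π ∘ shift) (shift^[k] x)) = fun x => π (shift^[k + 1] x) := by
    funext x
    rw [Function.iterate_succ_apply']
    rfl
  rw [h4] at h1
  rw [← h1, ← h2]
  rfl

/-- Telescoping: the block entropy of `ν` is the sum of the projection entropies of the shifted
measures. This is the chain rule, together with the fact that, given the letter `x k`, the points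
`π (σ^k x)` and `π (σ^(k+1) x)` determine each other. -/
lemma IsCoding.blockEnt_succ (hπ : IsCoding S S' K π) {D : ∀ N, E → T N}
    (hD : FinePartitions K D) (ν : Measure (Sig l)) [IsProbabilityMeasure ν] (k : ℕ) :
    blockEnt π (k + 1) ν = blockEnt π k ν + projEntropy π (ν.map shift^[k]) := by
  have hx : Measurable fun x : Sig l => x k := measurable_pi_apply k
  have hw := measurable_word (l := l) k
  have hw1 := measurable_word (l := l) (k + 1)
  have hX := hπ.measurable_comp k
  have hX1 := hπ.measurable_comp (k + 1)
  have hXK : ∀ x, π (shift^[k] x) ∈ K := fun x => hπ.mem _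
  have hX1K : ∀ x, π (shift^[k + 1] x) ∈ K := fun x => hπ.mem _
  obtain ⟨G, hG, hGx⟩ := hπ.exists_forward k
  obtain ⟨G', hG', hGx'⟩ := hπ.exists_backward k
  have h0 : ∀ x : Sig l, shift^[k] x 0 = x k := fun x => by rw [shift_iterate]; simp
  -- exchange `π (σ^(k+1) x)` and `π (σ^k x)` given `x k`
  have a1 := hD.hc_pair_sub_eq ν hX1 hX1K hX hXK hw hx hπ.measurable_S
    (fun x => by rw [hπ.eq (shift^[k] x), ← Function.iterate_succ_apply' shift, h0])
    hπ.measurable_S'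
    (fun x => by rw [Function.iterate_succ_apply' shift, hπ.eq', h0])
  -- exchange `π x` and `π (σ^k x)` given the first `k` letters
  have a2 := hD.hc_pair_sub_eq ν hX hXK hπ.measurable hπ.mem hx hw hG hGx hG' hGx'
  have c1 : ∀ {Y : Sig l → E}, Measurable Y → (∀ x, Y x ∈ K) →
      hc ν (word (k + 1)) Y = hc ν (fun x => (word k x, x k)) Y := fun hY hYK =>
    hD.hc_congr ν hY hYK hw1 (hw.prodMk hx) (fun a b => by
      rw [word_succ_iff, Prod.mk.injEq])
  have c2 : ∀ {Y : Sig l → E}, Measurable Y → (∀ x, Y x ∈ K) →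
      hc ν (word (k + 1)) Y = hc ν (fun x => (x k, word k x)) Y := fun hY hYK =>
    hD.hc_congr ν hY hYK hw1 (hx.prodMk hw) (fun a b => by
      rw [word_succ_iff, Prod.mk.injEq, and_comm])
  have b1 := c1 hX1 hX1K
  have b2 := c1 hX hXK
  have b3 := c2 hX hXK
  have b4 := c2 hπ.measurable hπ.mem
  rw [hπ.projEntropy_map hD ν k]
  unfold blockEnt
  linarith

lemma IsCoding.blockEnt_eq_sum (hπ : IsCoding S S' K π) {D : ∀ N, E → T N}
    (hD : FinePartitions K D) (ν : Measure (Sig l)) [IsProbabilityMeasure ν] (k : ℕ) :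
    blockEnt π k ν = ∑ j ∈ Finset.range k, projEntropy π (ν.map shift^[j]) := by
  induction k with
  | zero => simp [blockEnt]
  | succ k ih => rw [hπ.blockEnt_succ hD, ih, Finset.sum_range_succ]

lemma map_shift_iterate_of_invariant {ν : Measure (Sig l)} (hν : ν.map shift = ν) (k : ℕ) :
    ν.map shift^[k] = ν := by
  induction k with
  | zero => simp
  | succ k ih =>
    rw [Function.iterate_succ, ← Measure.map_map (measurable_shift_iterate k) measurable_shift,
      hν, ih]

lemma IsCoding.blockEnt_of_invariant (hπ : IsCoding S S' K π) {D : ∀ N, E → T N}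
    (hD : FinePartitions K D) (ν : Measure (Sig l)) [IsProbabilityMeasure ν]
    (hν : ν.map shift = ν) (k : ℕ) : blockEnt π k ν = k * projEntropy π ν := by
  rw [hπ.blockEnt_eq_sum hD]
  simp [map_shift_iterate_of_invariant hν]

end Dynamics

/-! ### Mixtures and periodic averages of measures -/

section Mixture

variable {Ω ι κ : Type*} [MeasurableSpace Ω]
  [Fintype ι] [MeasurableSpace ι] [MeasurableSingletonClass ι]
  [Fintype κ] [MeasurableSpace κ] [MeasurableSingletonClass κ]

/-- The average of the measures `ν 0, …, ν (k - 1)`. -/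
def avgMeasure (k : ℕ) (ν : ℕ → Measure Ω) : Measure Ω :=
  (k : ENNReal)⁻¹ • ∑ i ∈ Finset.range k, ν i

lemma isProbabilityMeasure_avg {k : ℕ} (hk : 0 < k) (ν : ℕ → Measure Ω)
    [∀ i, IsProbabilityMeasure (ν i)] : IsProbabilityMeasure (avgMeasure k ν) := by
  constructor
  simp only [avgMeasure, Measure.smul_apply, Measure.coe_finsetSum, Finset.sum_apply,
    measure_univ, Finset.sum_const, Finset.card_range, nsmul_eq_mul, mul_one, smul_eq_mul]
  exact ENNReal.inv_mul_cancel (by exact_mod_cast hk.ne') (ENNReal.natCast_ne_top k)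

lemma avgMeasure_real (k : ℕ) (ν : ℕ → Measure Ω)
    [∀ i, IsProbabilityMeasure (ν i)] (s : Set Ω) :
    (avgMeasure k ν).real s = (k : ℝ)⁻¹ * ∑ i ∈ Finset.range k, (ν i).real s := by
  simp only [avgMeasure, Measure.real, Measure.smul_apply, Measure.coe_finsetSum,
    Finset.sum_apply, smul_eq_mul, ENNReal.toReal_mul, ENNReal.toReal_inv, ENNReal.toReal_natCast]
  rw [ENNReal.toReal_sum fun i _ => measure_ne_top _ _]

/-- Concavity of entropy in the measure. -/
lemma avg_ent_le (k : ℕ) (hk : 0 < k) (ν : ℕ → Measure Ω) [∀ i, IsProbabilityMeasure (ν i)]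
    (u : Ω → ι) :
    (k : ℝ)⁻¹ * ∑ i ∈ Finset.range k, ent (ν i) u ≤ ent (avgMeasure k ν) u := by
  unfold ent
  rw [Finset.sum_comm, Finset.mul_sum]
  refine Finset.sum_le_sum fun j _ => ?_
  rw [avgMeasure_real, Finset.mul_sum, Finset.mul_sum]
  have hk' : (0 : ℝ) < k := by exact_mod_cast hk
  exact Real.concaveOn_negMulLog.le_map_sum (t := Finset.range k) (w := fun _ => (k : ℝ)⁻¹)
    (p := fun i => (ν i).real (u ⁻¹' {j})) (fun _ _ => by positivity)
    (by simp [hk'.ne']) (fun i _ => measureReal_nonneg)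

/-- Entropy is concave only up to the entropy `log k` of the mixing weights. -/
lemma ent_avg_le (k : ℕ) (hk : 0 < k) (ν : ℕ → Measure Ω) [∀ i, IsProbabilityMeasure (ν i)]
    {u : Ω → ι} (hu : Measurable u) :
    ent (avgMeasure k ν) u
      ≤ (k : ℝ)⁻¹ * ∑ i ∈ Finset.range k, ent (ν i) u + Real.log k := by
  have hk' : (0 : ℝ) < k := by exact_mod_cast hk
  have hpr := isProbabilityMeasure_avg hk ν
  have key : ∀ j, negMulLog ((avgMeasure k ν).real (u ⁻¹' {j}))
      ≤ (k : ℝ)⁻¹ * ∑ i ∈ Finset.range k, negMulLog ((ν i).real (u ⁻¹' {j}))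
        + (avgMeasure k ν).real (u ⁻¹' {j}) * Real.log k := by
    intro j
    rw [avgMeasure_real, Finset.mul_sum]
    refine (negMulLog_sum_le _ (fun i => (k : ℝ)⁻¹ * (ν i).real (u ⁻¹' {j}))
      (fun i => mul_nonneg (by positivity) measureReal_nonneg)).trans (le_of_eq ?_)
    rw [Finset.mul_sum, Finset.sum_mul, ← Finset.sum_add_distrib]
    refine Finset.sum_congr rfl fun i _ => ?_
    rw [Real.negMulLog_mul]
    have : negMulLog (k : ℝ)⁻¹ = (k : ℝ)⁻¹ * Real.log k := by
      rw [negMulLog, Real.log_inv]; ring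
    rw [this]; ring
  calc ent (avgMeasure k ν) u ≤ _ := Finset.sum_le_sum fun j _ => key j
    _ = _ := by
      rw [Finset.sum_add_distrib, ← Finset.sum_mul, sum_fibre_eq_one _ hu, one_mul,
        ← Finset.mul_sum, Finset.sum_comm]
      rfl

/-- Conditional entropy is affine in the measure up to `log k` for averages of `k` measures. -/
lemma abs_cent_avg_sub_le (k : ℕ) (hk : 0 < k) (ν : ℕ → Measure Ω)
    [∀ i, IsProbabilityMeasure (ν i)]
    {u : Ω → ι} (hu : Measurable u) {v : Ω → κ} (hv : Measurable v) :
    |cent (avgMeasure k ν) u v - (k : ℝ)⁻¹ * ∑ i ∈ Finset.range k, cent (ν i) u v|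
      ≤ Real.log k := by
  have h1 := avg_ent_le k hk ν (fun ω => (u ω, v ω))
  have h2 := avg_ent_le k hk ν v
  have h3 := ent_avg_le k hk ν (hu.prodMk hv)
  have h4 := ent_avg_le k hk ν hv
  unfold cent
  rw [Finset.sum_sub_distrib, mul_sub, abs_le]
  constructor <;> linarith

end Mixture

section Periodic

variable {l : ℕ} {E : Type*}
  [MetricSpace E] [CompleteSpace E] [SecondCountableTopology E]
  [mE : MeasurableSpace E] [BorelSpace E]
  {T : ℕ → Type*} [∀ N, Fintype (T N)] [∀ N, MeasurableSpace (T N)]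
  [∀ N, MeasurableSingletonClass (T N)]
  {S S' : Fin l → E → E} {K : Set E} {π : Sig l → E}

/-- The limit of `abs_cent_avg_sub_le` along a fine sequence of partitions. -/
lemma FinePartitions.abs_hc_avg_sub_le {Ω ι : Type*} [MeasurableSpace Ω] [Fintype ι]
    [MeasurableSpace ι] [MeasurableSingletonClass ι] [DecidableEq ι] {D : ∀ N, E → T N}
    (hD : FinePartitions K D) (k : ℕ) (hk : 0 < k) (ν : ℕ → Measure Ω)
    [∀ i, IsProbabilityMeasure (ν i)] {X : Ω → E} (hX : Measurable X) (hXK : ∀ ω, X ω ∈ K)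
    {u : Ω → ι} (hu : Measurable u) :
    |hc (avgMeasure k ν) u X - (k : ℝ)⁻¹ * ∑ i ∈ Finset.range k, hc (ν i) u X| ≤ Real.log k := by
  have hpr := isProbabilityMeasure_avg hk ν
  have h1 := hD.tendsto_cent (avgMeasure k ν) hX hXK hu
  have h2 := fun i => hD.tendsto_cent (ν i) hX hXK hu
  have h3 := (h1.sub ((tendsto_finsetSum (Finset.range k) fun i _ => h2 i).const_mul
    (k : ℝ)⁻¹)).abs
  exact le_of_tendsto' h3 fun N => abs_cent_avg_sub_le k hk ν hu ((hD.measurable N).comp hX)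

/-- The average of `ν` over one period of the shift, for a `σ^k`-invariant measure `ν`. -/
def periodAvg (k : ℕ) (ν : Measure (Sig l)) : Measure (Sig l) :=
  avgMeasure k fun i => ν.map shift^[i]

instance isProbabilityMeasure_map_iterate (ν : Measure (Sig l)) [IsProbabilityMeasure ν] (i : ℕ) :
    IsProbabilityMeasure (ν.map shift^[i]) :=
  Measure.isProbabilityMeasure_map (measurable_shift_iterate i).aemeasurable

/-- Shifting permutes the `k` summands of the average cyclically. -/
lemma map_shift_periodAvg {k : ℕ} {ν : Measure (Sig l)} (hν : ν.map shift^[k] = ν) :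
    (periodAvg k ν).map shift = periodAvg k ν := by
  have h1 : ∀ i, (ν.map shift^[i]).map shift = ν.map shift^[i + 1] := fun i => by
    rw [Measure.map_map measurable_shift (measurable_shift_iterate i), ← Function.iterate_succ']
  unfold periodAvg avgMeasure
  rw [Measure.map_smul]
  congr 1
  rw [← Measure.mapₗ_apply_of_measurable measurable_shift, map_sum]
  simp_rw [Measure.mapₗ_apply_of_measurable measurable_shift, h1]
  cases k with
  | zero => rfl
  | succ n =>
    rw [Finset.sum_range_succ, Finset.sum_range_succ', hν, Function.iterate_zero, Measure.map_id]

lemma integral_periodAvg {k : ℕ} {ν : Measure (Sig l)} [IsProbabilityMeasure ν]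
    {g : Sig l → ℝ} (hg : Measurable g) {M : ℝ} (hM : ∀ x, |g x| ≤ M) :
    ∫ x, g x ∂(periodAvg k ν) = (k : ℝ)⁻¹ * ∫ x, birk g k x ∂ν := by
  have hInt : ∀ (μ : Measure (Sig l)) [IsProbabilityMeasure μ] (i : ℕ),
      Integrable (fun x => g (shift^[i] x)) μ := fun μ _ i =>
    Integrable.of_bound (hg.comp (measurable_shift_iterate i)).aestronglyMeasurable M
      (ae_of_all _ fun x => hM _)
  unfold periodAvg avgMeasure birk
  rw [integral_smul_measure, integral_finsetSum_measure
      (fun i _ => (show Integrable g (ν.map shift^[i]) from hInt _ 0)),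
    integral_finsetSum _ fun i _ => hInt _ i]
  simp only [ENNReal.toReal_inv, ENNReal.toReal_natCast, smul_eq_mul]
  congr 1
  refine Finset.sum_congr rfl fun i _ => ?_
  rw [integral_map (measurable_shift_iterate i).aemeasurable hg.aestronglyMeasurable]

/-- Averaging a `σ^k`-invariant measure over a period changes the block entropy by `O(log k)`. -/
lemma IsCoding.blockEnt_periodAvg (hπ : IsCoding S S' K π) {D : ∀ N, E → T N}
    (hD : FinePartitions K D) {k : ℕ} (hk : 0 < k) (ν : Measure (Sig l)) [IsProbabilityMeasure ν]
    (hν : ν.map shift^[k] = ν) :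
    blockEnt π k ν - 2 * Real.log k ≤ blockEnt π k (periodAvg k ν) := by
  have hmm : ∀ i j, (ν.map shift^[i]).map shift^[j] = ν.map shift^[i + j] := fun i j => by
    rw [Measure.map_map (measurable_shift_iterate j) (measurable_shift_iterate i),
      ← Function.iterate_add, add_comm]
  -- by telescoping, the block entropy is a sum over a full period
  have hconst : ∀ i, blockEnt π k (ν.map shift^[i]) = blockEnt π k ν := by
    intro i
    induction i with
    | zero => simp
    | succ i ih =>
      rw [← ih, hπ.blockEnt_eq_sum hD, hπ.blockEnt_eq_sum hD]
      simp_rw [hmm]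
      have h1 := Finset.sum_range_succ (fun j => projEntropy π (ν.map shift^[i + j])) k
      rw [Finset.sum_range_succ'] at h1
      have h2 : ν.map shift^[i + k] = ν.map shift^[i] := by
        rw [add_comm, ← hmm k i, hν]
      have h3 : ∀ j, i + 1 + j = i + (j + 1) := fun j => by omega
      simp_rw [h3]
      rw [h2] at h1
      simpa using h1
  have h1 := hD.abs_hc_avg_sub_le k hk (fun i => ν.map shift^[i]) (hπ.measurable_comp k)
    (fun x => hπ.mem _) (measurable_word k)
  have h2 := hD.abs_hc_avg_sub_le k hk (fun i => ν.map shift^[i]) hπ.measurable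
    hπ.mem (measurable_word k)
  have h3 : (k : ℝ)⁻¹ * ∑ i ∈ Finset.range k, blockEnt π k (ν.map shift^[i]) = blockEnt π k ν := by
    simp_rw [hconst]
    have : (k : ℝ) ≠ 0 := by exact_mod_cast hk.ne'
    simp [this]
  unfold blockEnt at h3
  rw [Finset.sum_sub_distrib, mul_sub] at h3
  have h4 := (abs_le.1 h1).1
  have h5 := (abs_le.1 h2).2
  unfold periodAvg blockEnt
  linarith

end Periodic

/-! ### Cells of the affine system -/

section Geometry

variable {d l : ℕ}

/-- The data of an affine iterated function system `y ↦ A y + c i` with coding map `π`;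
`B` is the inverse of `A` and `R` bounds the norm on the compact set `K`. -/
structure AffineCoding (A B : EuclideanSpace ℝ (Fin d) →L[ℝ] EuclideanSpace ℝ (Fin d))
    (c : Fin l → EuclideanSpace ℝ (Fin d)) (K : Set (EuclideanSpace ℝ (Fin d)))
    (π : Sig l → EuclideanSpace ℝ (Fin d)) (R : ℝ) : Prop where
  inv_left : ∀ x, B (A x) = x
  inv_right : ∀ x, A (B x) = x
  norm_lt : ‖A‖ < 1
  compact : IsCompact K
  norm_le : ∀ x ∈ K, ‖x‖ ≤ R
  mem : ∀ x, π x ∈ K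
  eq : ∀ x, π x = A (π (shift x)) + c (x 0)

/-- The index `α ∈ ℤ^d` of the cell `Aᴺ ([0,1)^d + α)` which contains `x`; here `B = A⁻¹`. -/
def cellIdx (B : EuclideanSpace ℝ (Fin d) →L[ℝ] EuclideanSpace ℝ (Fin d)) (N : ℕ)
    (x : EuclideanSpace ℝ (Fin d)) : Fin d → ℤ := fun i => ⌊(B ^ N) x i⌋

/-- The partial sum `∑_{i<k} Aⁱ c_{x i}`: the translation part of `S_{x 0} ∘ ⋯ ∘ S_{x (k-1)}`. -/
def transl (A : EuclideanSpace ℝ (Fin d) →L[ℝ] EuclideanSpace ℝ (Fin d))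
    (c : Fin l → EuclideanSpace ℝ (Fin d)) (k : ℕ) (w : Fin k → Fin l) :
    EuclideanSpace ℝ (Fin d) := ∑ i : Fin k, (A ^ (i : ℕ)) (c (w i))

lemma norm_le_of_coord_le {M : ℝ} (hM : 0 ≤ M) (v : EuclideanSpace ℝ (Fin d))
    (h : ∀ i, |v i| ≤ M) : ‖v‖ ≤ d * M := by
  rw [EuclideanSpace.norm_eq]
  refine Real.sqrt_le_iff.2 ⟨by positivity, ?_⟩
  calc ∑ i, ‖v i‖ ^ 2 ≤ ∑ _i : Fin d, M ^ 2 := by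
        refine Finset.sum_le_sum fun i _ => ?_
        have := h i
        rw [← Real.norm_eq_abs] at this
        gcongr
    _ = d * M ^ 2 := by simp
    _ ≤ (d * M) ^ 2 := by
        rw [mul_pow]
        have : (d : ℝ) ≤ (d : ℝ) ^ 2 := by exact_mod_cast Nat.le_self_pow two_ne_zero d
        gcongr

lemma measurable_cellIdx (B : EuclideanSpace ℝ (Fin d) →L[ℝ] EuclideanSpace ℝ (Fin d)) (N : ℕ) :
    Measurable (cellIdx B N) := by
  refine measurable_pi_lambda _ fun i => Int.measurable_floor.comp ?_
  have : Continuous fun x => (B ^ N) x i := by fun_prop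
  exact this.measurable

variable {A B : EuclideanSpace ℝ (Fin d) →L[ℝ] EuclideanSpace ℝ (Fin d)}
  {c : Fin l → EuclideanSpace ℝ (Fin d)} {K : Set (EuclideanSpace ℝ (Fin d))}
  {π : Sig l → EuclideanSpace ℝ (Fin d)} {R : ℝ}

namespace AffineCoding

lemma pow_left (h : AffineCoding A B c K π R) (k : ℕ) (x) : (B ^ k) ((A ^ k) x) = x := by
  have h1 : B * A = 1 := by ext1 x; exact h.inv_left x
  have h2 : A * B = 1 := by ext1 x; exact h.inv_right x
  have h3 : B ^ k * A ^ k = 1 := by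
    rw [← Commute.mul_pow (show Commute B A from h1.trans h2.symm), h1, one_pow]
  exact congrArg (fun L => L x) h3

lemma pow_right (h : AffineCoding A B c K π R) (k : ℕ) (x) : (A ^ k) ((B ^ k) x) = x := by
  have h1 : B * A = 1 := by ext1 x; exact h.inv_left x
  have h2 : A * B = 1 := by ext1 x; exact h.inv_right x
  have h3 : A ^ k * B ^ k = 1 := by
    rw [← Commute.mul_pow (show Commute A B from h2.trans h1.symm), h2, one_pow]
  exact congrArg (fun L => L x) h3

lemma norm_pow_apply_le (_h : AffineCoding A B c K π R) (k : ℕ) (x) :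
    ‖(A ^ k) x‖ ≤ ‖A‖ ^ k * ‖x‖ := by
  induction k with
  | zero => simp
  | succ k ih =>
    rw [pow_succ', mul_apply_eq_comp]
    refine (A.le_opNorm _).trans ?_
    rw [pow_succ', mul_assoc]
    gcongr

lemma tendsto_norm_pow (h : AffineCoding A B c K π R) (C : ℝ) :
    Tendsto (fun k : ℕ => ‖A‖ ^ k * C) atTop (nhds 0) := by
  simpa using (tendsto_pow_atTop_nhds_zero_of_lt_one (norm_nonneg A) h.norm_lt).mul_const C

/-- `π x = S_{x 0} ∘ ⋯ ∘ S_{x (k-1)} (π (σ^k x))`, with the composition written out. -/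
lemma eq_transl (h : AffineCoding A B c K π R) (k : ℕ) (x : Sig l) :
    π x = transl A c k (word k x) + (A ^ k) (π (shift^[k] x)) := by
  induction k with
  | zero => simp [transl]
  | succ k ih =>
    have h0 : shift^[k] x 0 = x k := by rw [shift_iterate]; simp
    rw [ih, h.eq (shift^[k] x), ← Function.iterate_succ_apply' shift, h0]
    simp only [transl, word, Fin.sum_univ_castSucc, Fin.val_castSucc, Fin.val_last, map_add,
      pow_succ, mul_apply_eq_comp]
    abel

/-- `eq_transl` after rescaling by `B ^ (N + k)`: the rescaled point `π x` is a translate, by a vector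
depending only on the first `k` letters, of the point `π (σ^k x)` rescaled by `B ^ N`. -/
lemma pow_apply_eq (h : AffineCoding A B c K π R) (N k : ℕ) (x : Sig l) :
    (B ^ (N + k)) (π x)
      = (B ^ (N + k)) (transl A c k (word k x)) + (B ^ N) (π (shift^[k] x)) := by
  conv_lhs => rw [h.eq_transl k x]
  rw [map_add, pow_add B N k, mul_apply_eq_comp _ _ ((A ^ k) _), h.pow_left]

/-- `π` is a pointwise limit of functions of finitely many letters. -/
lemma measurable (h : AffineCoding A B c K π R) : Measurable π := by
  refine measurable_of_tendsto_metrizable (f := fun k x => transl A c k (word k x)) (fun k =>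
    (measurable_of_finite (transl A c k)).comp (measurable_word k)) ?_
  rw [tendsto_pi_nhds]
  intro x
  rw [tendsto_iff_norm_sub_tendsto_zero]
  refine squeeze_zero (fun _ => norm_nonneg _) (fun k => ?_) (h.tendsto_norm_pow R)
  conv_lhs => rw [h.eq_transl k x]
  rw [sub_add_cancel_left, norm_neg]
  refine (h.norm_pow_apply_le k _).trans ?_
  have := h.norm_le _ (h.mem (shift^[k] x))
  gcongr

lemma isCoding (h : AffineCoding A B c K π R) :
    IsCoding (fun i y => A y + c i) (fun i y => B (y - c i)) K π where
  measurable := h.measurable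
  mem := h.mem
  measurable_S i := by
    have : Continuous fun y => A y + c i := by fun_prop
    exact this.measurable
  measurable_S' i := by
    have : Continuous fun y => B (y - c i) := by fun_prop
    exact this.measurable
  eq := h.eq
  eq' x := by
    show _ = B (π x - c (x 0))
    rw [h.eq x, add_sub_cancel_right, h.inv_left]

/-- Points whose codes share a long prefix are close. -/
lemma dist_le_of_word_eq (h : AffineCoding A B c K π R) {k : ℕ} {x y : Sig l}
    (hxy : word k x = word k y) : dist (π x) (π y) ≤ ‖A‖ ^ k * (2 * R) := by
  rw [dist_eq_norm, h.eq_transl k x, h.eq_transl k y, hxy, add_sub_add_left_eq_sub, ← map_sub]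
  refine (h.norm_pow_apply_le k _).trans ?_
  have h1 := h.norm_le _ (h.mem (shift^[k] x))
  have h2 := h.norm_le _ (h.mem (shift^[k] y))
  have h3 := norm_sub_le (π (shift^[k] x)) (π (shift^[k] y))
  gcongr
  linarith

/-- Points in a common cell of level `N` are close. -/
lemma dist_le_of_cellIdx_eq (h : AffineCoding A B c K π R) {N : ℕ} {x y}
    (hxy : cellIdx B N x = cellIdx B N y) : dist x y ≤ ‖A‖ ^ N * d := by
  have h1 : x - y = (A ^ N) ((B ^ N) (x - y)) := (h.pow_right N _).symm
  rw [dist_eq_norm, h1]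
  refine (h.norm_pow_apply_le N _).trans ?_
  have h2 : ‖(B ^ N) (x - y)‖ ≤ d * 1 := by
    refine norm_le_of_coord_le zero_le_one _ fun i => ?_
    rw [map_sub]
    exact (Int.abs_sub_lt_one_of_floor_eq_floor (congrFun hxy i)).le
  rw [mul_one] at h2
  gcongr

lemma mem_image_cube_iff (h : AffineCoding A B c K π R) (N : ℕ) (α : Fin d → ℤ) (x) :
    x ∈ ⇑(A ^ N) '' cube d α ↔ cellIdx B N x = α := by
  have hfl : ∀ y : EuclideanSpace ℝ (Fin d), y ∈ cube d α ↔ (fun i => ⌊y i⌋) = α := fun y => by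
    simp only [cube, mem_ofPred_eq, funext_iff, Int.floor_eq_iff]
  constructor
  · rintro ⟨y, hy, rfl⟩
    unfold cellIdx
    rw [h.pow_left]
    exact (hfl y).1 hy
  · intro hx
    exact ⟨(B ^ N) x, (hfl _).2 hx, h.pow_right N x⟩

lemma abs_coord_le (h : AffineCoding A B c K π R) (x : Sig l) (i : Fin d) : |π x i| ≤ R := by
  have := PiLp.norm_apply_le (π x) i
  rw [Real.norm_eq_abs] at this
  exact this.trans (h.norm_le _ (h.mem x))

end AffineCoding

/-- The indices of the cells of level `N` which contain a point coded by `π`. -/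
abbrev Cell (B : EuclideanSpace ℝ (Fin d) →L[ℝ] EuclideanSpace ℝ (Fin d))
    (π : Sig l → EuclideanSpace ℝ (Fin d)) (N : ℕ) : Type :=
  ↥(range fun x : Sig l => cellIdx B N (π x))

/-- By compactness of `K`, only finitely many cells of each level contain a coded point. -/
lemma AffineCoding.finite_cell (h : AffineCoding A B c K π R) (N : ℕ) : Finite (Cell B π N) := by
  set M : ℤ := ⌈‖B ^ N‖ * R⌉ + 1 with hM
  refine Set.Finite.subset (Set.Finite.pi' fun _ : Fin d => Set.finite_Icc (-M) M) ?_
  rintro _ ⟨x, rfl⟩ i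
  have h1 : |(B ^ N) (π x) i| ≤ ‖B ^ N‖ * R := by
    have h2 := PiLp.norm_apply_le ((B ^ N) (π x)) i
    rw [Real.norm_eq_abs] at h2
    refine h2.trans (((B ^ N).le_opNorm _).trans ?_)
    have := h.norm_le _ (h.mem x)
    gcongr
  have h3 := Int.le_ceil (‖B ^ N‖ * R)
  rw [abs_le] at h1
  simp only [cellIdx, mem_Icc, hM]
  generalize (B ^ N) (π x) i = t at h1
  constructor
  · rw [Int.le_floor]; push_cast; linarith
  · have : (⌊t⌋ : ℝ) ≤ ((⌈‖B ^ N‖ * R⌉ + 1 : ℤ) : ℝ) := by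
      push_cast
      linarith [Int.floor_le t]
    exact_mod_cast this

/-- The partition of `ℝ^d` into the cells of level `N` that meet the image of `π`, the remainder
being added to an arbitrary cell. -/
def cellMap [Nonempty (Sig l)] (B : EuclideanSpace ℝ (Fin d) →L[ℝ] EuclideanSpace ℝ (Fin d))
    (π : Sig l → EuclideanSpace ℝ (Fin d)) (N : ℕ) (x : EuclideanSpace ℝ (Fin d)) : Cell B π N :=
  open Classical in
  if h : cellIdx B N x ∈ range fun x : Sig l => cellIdx B N (π x) then ⟨_, h⟩
  else ⟨_, mem_range_self (Classical.arbitrary (Sig l))⟩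

lemma coe_cellMap [Nonempty (Sig l)] (N : ℕ) (x : Sig l) :
    (cellMap B π N (π x) : Fin d → ℤ) = cellIdx B N (π x) := by
  unfold cellMap
  rw [dif_pos (mem_range_self x)]

lemma measurable_cellMap [Nonempty (Sig l)] (N : ℕ) : Measurable (cellMap B π N) := by
  classical
  have : cellMap B π N = (fun α : Fin d → ℤ =>
      if h : α ∈ range fun x : Sig l => cellIdx B N (π x) then (⟨α, h⟩ : Cell B π N)
      else ⟨_, mem_range_self (Classical.arbitrary (Sig l))⟩) ∘ cellIdx B N := by
    funext x
    simp only [cellMap, Function.comp]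
  rw [this]
  exact (measurable_of_countable _).comp (measurable_cellIdx B N)

lemma AffineCoding.finePartitions [Nonempty (Sig l)] [∀ N, Fintype (Cell B π N)]
    (h : AffineCoding A B c K π R) :
    FinePartitions (range π) (cellMap B π) where
  measurable := measurable_cellMap
  fine δ hδ := by
    filter_upwards [(h.tendsto_norm_pow d).eventually (gt_mem_nhds hδ)] with N hN
    rintro _ ⟨x, rfl⟩ _ ⟨y, rfl⟩ hxy
    refine (h.dist_le_of_cellIdx_eq ?_).trans_lt hN
    rw [← coe_cellMap, ← coe_cellMap, hxy]

/-- The coding data with `K` replaced by the image of `π`, on which `cellMap` is the true cell map. -/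
lemma AffineCoding.isCoding_range (h : AffineCoding A B c K π R) :
    IsCoding (fun i y => A y + c i) (fun i y => B (y - c i)) (range π) π :=
  { h.isCoding with mem := mem_range_self }

end Geometry

/-! ### Lower bound for the partition function -/

section Gibbs

/-- Gibbs' inequality. -/
lemma gibbs {τ : Type*} [Fintype τ] (p g : τ → ℝ) (hp : ∀ c, 0 ≤ p c) (hp1 : ∑ c, p c = 1)
    (hg : ∀ c, 0 < g c) :
    ∑ c, (negMulLog (p c) + p c * Real.log (g c)) ≤ Real.log (∑ c, g c) := by
  have hne : (Finset.univ : Finset τ).Nonempty := by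
    by_contra h
    rw [Finset.not_nonempty_iff_eq_empty] at h
    rw [h] at hp1
    simp at hp1
  set Z := ∑ c, g c with hZ
  have hZ0 : 0 < Z := Finset.sum_pos (fun c _ => hg c) hne
  have key : ∀ c, negMulLog (p c) + p c * Real.log (g c) ≤ p c * Real.log Z + (g c / Z - p c) := by
    intro c
    rcases (hp c).eq_or_lt with h0 | h0
    · rw [← h0]
      simpa using div_nonneg (hg c).le hZ0.le
    · have h1 := Real.log_le_sub_one_of_pos (div_pos (hg c) (mul_pos hZ0 h0))
      rw [Real.log_div (hg c).ne' (mul_pos hZ0 h0).ne', Real.log_mul hZ0.ne' h0.ne'] at h1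
      have h2 := mul_le_mul_of_nonneg_left h1 h0.le
      have h3 : p c * (g c / (Z * p c) - 1) = g c / Z - p c := by field_simp
      rw [h3] at h2
      rw [negMulLog]
      linarith
  calc _ ≤ _ := Finset.sum_le_sum fun c _ => key c
    _ = _ := by
      rw [Finset.sum_add_distrib, Finset.sum_sub_distrib, ← Finset.sum_mul, ← Finset.sum_div,
        hp1, ← hZ, div_self hZ0.ne']
      ring

/-- If the increments of a nonnegative sequence over steps of length `k` are eventually at least
`k h - C`, with `C` independent of `k`, then the sequence grows at least at rate `h`. -/
lemma eventually_mul_le_of_increments {a : ℕ → ℝ} (ha : ∀ N, 0 ≤ a N) {h C : ℝ}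
    (hinc : ∀ k : ℕ, ∃ N₀, ∀ N ≥ N₀, k * h - C ≤ a (N + k) - a N) {ε : ℝ} (hε : 0 < ε) :
    ∀ᶠ N : ℕ in atTop, (h - ε) * N ≤ a N := by
  rcases le_or_gt h ε with hhε | hhε
  · refine Eventually.of_forall fun N => (mul_nonpos_of_nonpos_of_nonneg (by linarith)
      (Nat.cast_nonneg N)).trans (ha N)
  -- a step so long that the loss `C` costs at most the rate `ε / 2`
  obtain ⟨k, hk⟩ := exists_nat_gt (max 0 (2 * C / ε))
  have hk0 : (0 : ℝ) < k := (le_max_left _ _).trans_lt hk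
  have hk0' : 0 < k := by exact_mod_cast hk0
  have hkC : C ≤ k * (ε / 2) := by
    have := (le_max_right 0 (2 * C / ε)).trans_lt hk
    rw [div_lt_iff₀ hε] at this
    linarith
  obtain ⟨N₀, hN₀⟩ := hinc k
  have hmul : ∀ (q M : ℕ), N₀ ≤ M → q * (k * h - C) ≤ a (M + k * q) := by
    intro q M hM
    induction q with
    | zero => simpa using ha M
    | succ q ih =>
      have := hN₀ (M + k * q) (by omega)
      rw [show M + k * (q + 1) = M + k * q + k by ring]
      push_cast
      linarith
  -- beyond `N₁` the initial segment and the incomplete last step cost at most the rate `ε / 2`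
  obtain ⟨N₁, hN₁⟩ := exists_nat_gt ((N₀ + k) * (h - ε / 2) / (ε / 2))
  rw [div_lt_iff₀ (half_pos hε)] at hN₁
  filter_upwards [eventually_ge_atTop (max N₀ N₁)] with N hN
  have hNN₀ : N₀ ≤ N := (le_max_left _ _).trans hN
  have hNN₁ : (N₁ : ℝ) ≤ N := by exact_mod_cast (le_max_right _ _).trans hN
  set q := (N - N₀) / k with hq
  have e1 : (N - N₀) % k + k * q = N - N₀ := Nat.mod_add_div _ _
  have e2 : (N - N₀) % k < k := Nat.mod_lt _ hk0'
  have h1 := hmul q (N₀ + (N - N₀) % k) (by omega)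
  rw [show N₀ + (N - N₀) % k + k * q = N by omega] at h1
  have h2 : (N : ℝ) ≤ N₀ + k + k * q := by exact_mod_cast (by omega : N ≤ N₀ + k + k * q)
  have h3 : (q : ℝ) * (k * (h - ε / 2)) ≤ q * (k * h - C) := by
    refine mul_le_mul_of_nonneg_left ?_ (Nat.cast_nonneg q)
    linarith
  have h4 : (N - (N₀ + k)) * (h - ε / 2) ≤ k * q * (h - ε / 2) :=
    mul_le_mul_of_nonneg_right (by linarith) (by linarith)
  have h5 : (N₁ : ℝ) * (ε / 2) ≤ N * (ε / 2) := by gcongr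
  nlinarith

end Gibbs

section Close

variable {Ω ι κ : Type*} [MeasurableSpace Ω] {d : ℕ}
  [Fintype ι] [MeasurableSpace ι] [MeasurableSingletonClass ι]
  [Fintype κ] [MeasurableSpace κ] [MeasurableSingletonClass κ]

/-- If `u` is determined by `v` and an integer vector `q u`, and `v` predicts `q u` up to an error
at most `M` in each coordinate, then the entropy of `u` exceeds that of `v` by at most
`d log (2 M + 1)`. -/
lemma ent_le_add_of_close (μ : Measure Ω) [IsProbabilityMeasure μ] (M : ℕ) {u : Ω → ι} {v : Ω → κ}
    (hu : Measurable u) (hv : Measurable v) (q : ι → Fin d → ℤ) (p : κ → Fin d → ℤ)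
    (hdet : ∀ a b, v a = v b → q (u a) = q (u b) → u a = u b)
    (hclose : ∀ ω i, |q (u ω) i - p (v ω) i| ≤ M) :
    ent μ u ≤ ent μ v + d * Real.log (2 * M + 1) := by
  classical
  -- the prediction error takes values in the box `F` of `(2 M + 1) ^ d` integer vectors
  set F := Fintype.piFinset fun _ : Fin d => Finset.Icc (-(M : ℤ)) M with hF
  have hmem : ∀ ω, q (u ω) - p (v ω) ∈ F := fun ω => by
    rw [hF, Fintype.mem_piFinset]
    intro i
    rw [Finset.mem_Icc]
    exact abs_le.1 (hclose ω i)
  set e : Ω → F := fun ω => ⟨q (u ω) - p (v ω), hmem ω⟩ with he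
  have hem : Measurable e := by
    refine Measurable.subtype_mk ?_
    exact ((measurable_of_finite q).comp hu).sub ((measurable_of_finite p).comp hv)
  have h1 := ent_le_add_of_det μ hu hv hem (fun a b hab heq => hdet a b hab (by
    have h2 := congrArg Subtype.val heq
    simp only [he, hab] at h2
    exact sub_left_inj.1 h2))
  have h3 := ent_le_log_card μ hem
  have h4 : (Fintype.card F : ℝ) = (2 * M + 1) ^ d := by
    rw [Fintype.card_coe, hF, Fintype.card_piFinset]
    simp only [Int.card_Icc, Finset.prod_const, Finset.card_univ, Fintype.card_fin]
    have : ((M : ℤ) + 1 - -(M : ℤ)).toNat = 2 * M + 1 := by omega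
    rw [this]
    push_cast
    ring
  rw [h4, Real.log_pow] at h3
  linarith

lemma abs_floor_sub_floor_le {a b : ℝ} {M : ℕ} (h : |a - b| ≤ M) :
    |⌊a⌋ - ⌊b⌋| ≤ ((M + 1 : ℕ) : ℤ) := by
  have h1 := abs_le.1 h
  have a1 := Int.floor_le a
  have a2 := Int.lt_floor_add_one a
  have b1 := Int.floor_le b
  have b2 := Int.lt_floor_add_one b
  have c1 : ((⌊a⌋ - ⌊b⌋ : ℤ) : ℝ) < ((M + 1 : ℤ) : ℝ) := by push_cast; linarith
  have c2 : ((⌊b⌋ - ⌊a⌋ : ℤ) : ℝ) < ((M + 1 : ℤ) : ℝ) := by push_cast; linarith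
  rw [abs_le]
  have d1 : ⌊a⌋ - ⌊b⌋ < (M : ℤ) + 1 := by exact_mod_cast c1
  have d2 : ⌊b⌋ - ⌊a⌋ < (M : ℤ) + 1 := by exact_mod_cast c2
  push_cast
  constructor <;> linarith

end Close

section Upper

variable {d l : ℕ} {A B : EuclideanSpace ℝ (Fin d) →L[ℝ] EuclideanSpace ℝ (Fin d)}
  {c : Fin l → EuclideanSpace ℝ (Fin d)} {K : Set (EuclideanSpace ℝ (Fin d))}
  {π : Sig l → EuclideanSpace ℝ (Fin d)} {R : ℝ}
  [Nonempty (Sig l)] [∀ N, Fintype (Cell B π N)]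

/-- The entropy of the level `N` cells of `π` grows along blocks of length `k` by at least
`k h_π`, up to a constant which does not depend on `k`. -/
lemma AffineCoding.exists_increment (h : AffineCoding A B c K π R) (m : Measure (Sig l))
    [IsProbabilityMeasure m] (hm : m.map shift = m) (k : ℕ) :
    ∃ N₀, ∀ N ≥ N₀, k * projEntropy π m - (d * Real.log 3 + 1)
      ≤ ent m (fun x => cellMap B π (N + k) (π x)) - ent m (fun x => cellMap B π N (π x)) := by
  have hco := h.isCoding_range
  have hD := h.finePartitions
  have hw := measurable_word (l := l) k
  have hDm : ∀ N, Measurable fun x => cellMap B π N (π x) := fun N =>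
    (hD.measurable N).comp hco.measurable
  have hDk : ∀ N, Measurable fun x => cellMap B π N (π (shift^[k] x)) := fun N =>
    (hD.measurable N).comp (hco.measurable_comp k)
  have hlim := hD.tendsto_cent m hco.measurable hco.mem hw
  obtain ⟨N₀, hN₀⟩ := eventually_atTop.1 (hlim.eventually (gt_mem_nhds (lt_add_one _)))
  refine ⟨N₀, fun N hN => ?_⟩
  have e1 := hN₀ (N + k) (by omega)
  have e2 := hco.blockEnt_of_invariant hD m hm k
  have e3 := hc_le_cent m (hco.measurable_comp k) hw (hD.measurable N)
  have e4 : ent m (fun x => cellMap B π N (π (shift^[k] x)))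
      = ent m (fun x => cellMap B π N (π x)) := by
    conv_rhs => rw [← map_shift_iterate_of_invariant hm k]
    rw [ent_map m (measurable_shift_iterate k) (hDm N)]
  -- given the first `k` letters, the level `N + k` cell of `π x` determines the level `N` cell of
  -- `π (σ^k x)` up to an error `1` in each coordinate, by `pow_apply_eq` and rounding
  have e5 : ent m (fun x => (word k x, cellMap B π N (π (shift^[k] x))))
      ≤ ent m (fun x => (word k x, cellMap B π (N + k) (π x))) + d * Real.log 3 := by
    have := ent_le_add_of_close m 1 (hw.prodMk (hDk N)) (hw.prodMk (hDm (N + k)))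
      (fun z => (z.2 : Fin d → ℤ))
      (fun z i => (z.2 : Fin d → ℤ) i + ⌊-((B ^ (N + k)) (transl A c k z.1) i)⌋)
      (fun a b hab hq => by
        simp only [Prod.mk.injEq] at hab ⊢
        exact ⟨hab.1, Subtype.ext hq⟩)
      (fun x i => by
        simp only [coe_cellMap, cellIdx]
        have hx : (B ^ (N + k)) (π x) i = (B ^ (N + k)) (transl A c k (word k x)) i
            + (B ^ N) (π (shift^[k] x)) i := by
          rw [h.pow_apply_eq N k x]; rfl
        generalize (B ^ (N + k)) (π x) i = s at hx ⊢
        generalize (B ^ (N + k)) (transl A c k (word k x)) i = t at hx ⊢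
        generalize (B ^ N) (π (shift^[k] x)) i = r at hx ⊢
        obtain rfl : r = s + -t := by linarith
        have g1 := Int.le_floor_add s (-t)
        have g2 := Int.le_floor_add_floor s (-t)
        rw [abs_le]
        push_cast
        constructor <;> linarith)
    have h3 : (2 * ((1 : ℕ) : ℝ) + 1) = 3 := by norm_num
    rwa [h3] at this
  unfold blockEnt at e2
  unfold cent at e1 e3
  simp only [hc] at e2 e3
  linarith

/-- The term of the partition function attached to the cell `α` of level `n`. -/
def zTerm (A : EuclideanSpace ℝ (Fin d) →L[ℝ] EuclideanSpace ℝ (Fin d))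
    (K : Set (EuclideanSpace ℝ (Fin d))) (π : Sig l → EuclideanSpace ℝ (Fin d))
    (f : EuclideanSpace ℝ (Fin d) → ℝ) (n : ℕ) (α : Fin d → ℤ) : ℝ :=
  ⨆ β ∈ π ⁻¹' ((⇑(A ^ n) '' cube d α) ∩ K), Real.exp (birk (fun y => f (π y)) n β)

variable {f : EuclideanSpace ℝ (Fin d) → ℝ} {F : ℝ}

lemma abs_birk_le {g : Sig l → ℝ} (hF : ∀ x, |g x| ≤ F) (n : ℕ) (x : Sig l) :
    |birk g n x| ≤ n * F := by
  refine (Finset.abs_sum_le_sum_abs _ _).trans ?_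
  calc _ ≤ ∑ _i ∈ Finset.range n, F := Finset.sum_le_sum fun i _ => hF _
    _ = _ := by simp

lemma AffineCoding.mem_cell_iff (h : AffineCoding A B c K π R) (n : ℕ) (α : Fin d → ℤ)
    (β : Sig l) : β ∈ π ⁻¹' ((⇑(A ^ n) '' cube d α) ∩ K) ↔ cellIdx B n (π β) = α := by
  rw [mem_preimage, mem_inter_iff, h.mem_image_cube_iff, and_iff_left (h.mem β)]

lemma AffineCoding.bdd (_h : AffineCoding A B c K π R) (hF : ∀ x, |f (π x)| ≤ F) (n : ℕ)
    (α : Fin d → ℤ) :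
    BddAbove (range fun β : Sig l => ⨆ (_ : β ∈ π ⁻¹' ((⇑(A ^ n) '' cube d α) ∩ K)),
      Real.exp (birk (fun y => f (π y)) n β)) := by
  refine ⟨Real.exp (n * F), ?_⟩
  rintro _ ⟨β, rfl⟩
  exact Real.iSup_le (fun _ => Real.exp_le_exp.2 ((le_abs_self _).trans (abs_birk_le hF n β)))
    (Real.exp_pos _).le

lemma AffineCoding.exp_birk_le_zTerm (h : AffineCoding A B c K π R) (hF : ∀ x, |f (π x)| ≤ F)
    (n : ℕ) (β : Sig l) :
    Real.exp (birk (fun y => f (π y)) n β) ≤ zTerm A K π f n (cellIdx B n (π β)) := by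
  refine le_trans ?_ (le_ciSup (h.bdd hF n _) β)
  rw [ciSup_pos ((h.mem_cell_iff n _ β).2 rfl)]

lemma AffineCoding.zTerm_pos (h : AffineCoding A B c K π R) (hF : ∀ x, |f (π x)| ≤ F)
    (n : ℕ) (α : Cell B π n) : 0 < zTerm A K π f n α := by
  obtain ⟨_, ⟨β, rfl⟩⟩ := α
  exact (Real.exp_pos _).trans_le (h.exp_birk_le_zTerm hF n β)

/-- The supremum over a cell is attained up to a factor `2`. -/
lemma AffineCoding.exists_le_two_mul (h : AffineCoding A B c K π R) (hF : ∀ x, |f (π x)| ≤ F)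
    (n : ℕ) (α : Cell B π n) : ∃ β : Sig l, cellIdx B n (π β) = α ∧
      zTerm A K π f n α ≤ 2 * Real.exp (birk (fun y => f (π y)) n β) := by
  by_contra! hcon
  have hpos := h.zTerm_pos hF n α
  have : zTerm A K π f n α ≤ zTerm A K π f n α / 2 := by
    refine Real.iSup_le (fun β => Real.iSup_le (fun hβ => ?_) (by linarith)) (by linarith)
    have := hcon β ((h.mem_cell_iff n _ β).1 hβ)
    linarith
  linarith

/-- Cells without coded points contribute `0`: there the supremum over the empty condition is `sSup ∅ = 0`. -/
lemma AffineCoding.Zsum_eq (h : AffineCoding A B c K π R) (n : ℕ) :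
    Zsum A K π f n = ∑ α : Cell B π n, zTerm A K π f n α := by
  have h1 : Function.support (zTerm A K π f n)
      ⊆ range fun x : Sig l => cellIdx B n (π x) := by
    intro α hα
    by_contra hcon
    refine hα ?_
    have : ∀ β : Sig l, (⨆ (_ : β ∈ π ⁻¹' ((⇑(A ^ n) '' cube d α) ∩ K)),
        Real.exp (birk (fun y => f (π y)) n β)) = 0 := fun β => by
      rw [ciSup_neg fun hβ => hcon ⟨β, (h.mem_cell_iff n α β).1 hβ⟩, Real.sSup_empty]
    simp only [zTerm, this, ciSup_const]
  have h2 := tsum_subtype_eq_of_support_subset h1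
  rw [tsum_fintype] at h2
  exact h2.symm

/-- The Gibbs inequality for the level `N` cells. -/
lemma AffineCoding.ent_add_le_log_Zsum (h : AffineCoding A B c K π R) (hf : Continuous f)
    (hF : ∀ x, |f (π x)| ≤ F) (m : Measure (Sig l)) [IsProbabilityMeasure m]
    (hm : m.map shift = m) (N : ℕ) :
    ent m (fun x => cellMap B π N (π x)) + N * ∫ x, f (π x) ∂m ≤ Real.log (Zsum A K π f N) := by
  have hfm : Measurable fun x => f (π x) := hf.measurable.comp h.measurable
  have hInt : ∀ i, Integrable (fun x => f (π (shift^[i] x))) m := fun i =>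
    Integrable.of_bound (hfm.comp (measurable_shift_iterate i)).aestronglyMeasurable F
      (ae_of_all _ fun x => hF _)
  have hu : Measurable fun x => cellMap B π N (π x) :=
    (measurable_cellMap N).comp h.measurable
  have h1 : ∫ x, birk (fun y => f (π y)) N x ∂m = N * ∫ x, f (π x) ∂m := by
    unfold birk
    rw [integral_finsetSum _ fun i _ => hInt i]
    have : ∀ i, ∫ x, f (π (shift^[i] x)) ∂m = ∫ x, f (π x) ∂m := fun i => by
      conv_rhs => rw [← map_shift_iterate_of_invariant hm i]
      rw [integral_map (measurable_shift_iterate i).aemeasurable hfm.aestronglyMeasurable]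
    simp [this]
  have hbint : Integrable (birk (fun y => f (π y)) N) m := integrable_finsetSum _ fun i _ => hInt i
  have h2 : ∫ x, birk (fun y => f (π y)) N x ∂m
      ≤ ∑ α : Cell B π N, m.real ((fun x => cellMap B π N (π x)) ⁻¹' {α})
        * Real.log (zTerm A K π f N α) := by
    rw [integral_eq_sum_fibres m hu hbint]
    refine Finset.sum_le_sum fun α _ => ?_
    rw [← smul_eq_mul, ← setIntegral_const]
    refine setIntegral_mono_on hbint.integrableOn (integrable_const _).integrableOn
      (hu (measurableSet_singleton α)) fun x hx => ?_
    have h3 := h.exp_birk_le_zTerm (f := f) hF N x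
    rw [← coe_cellMap, show cellMap B π N (π x) = α from hx] at h3
    exact (Real.le_log_iff_exp_le (h.zTerm_pos hF N α)).2 h3
  have h3 := gibbs (fun α : Cell B π N => m.real ((fun x => cellMap B π N (π x)) ⁻¹' {α}))
    (fun α => zTerm A K π f N α) (fun _ => measureReal_nonneg) (sum_fibre_eq_one m hu)
    (fun α => h.zTerm_pos hF N α)
  rw [Finset.sum_add_distrib] at h3
  rw [h.Zsum_eq, ← h1]
  unfold ent
  linarith

/-- Lower bound for the partition function by the free energy of an invariant measure. -/
lemma AffineCoding.eventually_le_log_Zsum (h : AffineCoding A B c K π R) (hf : Continuous f)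
    (hF : ∀ x, |f (π x)| ≤ F) (m : Measure (Sig l)) [IsProbabilityMeasure m]
    (hm : m.map shift = m) {ε : ℝ} (hε : 0 < ε) :
    ∀ᶠ N : ℕ in atTop,
      projEntropy π m + ∫ x, f (π x) ∂m - ε ≤ Real.log (Zsum A K π f N) / N := by
  have hinc := eventually_mul_le_of_increments
    (a := fun N => ent m fun x => cellMap B π N (π x)) (fun N => ent_nonneg m _)
    (h.exists_increment m hm) hε
  filter_upwards [hinc, eventually_gt_atTop 0] with N hN hN0
  have h1 := h.ent_add_le_log_Zsum hf hF m hm N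
  rw [le_div_iff₀ (by exact_mod_cast hN0)]
  linarith

end Upper

/-! ### Upper bound for the partition function -/

section Independent

variable {Ω ι κ : Type*} [MeasurableSpace Ω]
  [Fintype ι] [MeasurableSpace ι] [MeasurableSingletonClass ι]
  [Fintype κ] [MeasurableSpace κ] [MeasurableSingletonClass κ]

/-- Independence makes conditioning irrelevant: `H(u | v) = H(u)`. -/
lemma cent_of_indepFun (μ : Measure Ω) [IsProbabilityMeasure μ] {u : Ω → ι} {v : Ω → κ}
    (hu : Measurable u) (hv : Measurable v) (h : ProbabilityTheory.IndepFun u v μ) :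
    cent μ u v = ent μ u := by
  have h1 : ∀ i j, μ.real ((fun ω => (u ω, v ω)) ⁻¹' {(i, j)})
      = μ.real (u ⁻¹' {i}) * μ.real (v ⁻¹' {j}) := fun i j => by
    rw [← Set.singleton_prod_singleton, Set.mk_preimage_prod]
    simp only [Measure.real, ← ENNReal.toReal_mul]
    rw [h.measure_inter_preimage_eq_mul _ _ (measurableSet_singleton i)
      (measurableSet_singleton j)]
  have h2 : ent μ (fun ω => (u ω, v ω)) = ent μ u + ent μ v := by
    unfold ent
    rw [Fintype.sum_prod_type]
    simp only [h1, Real.negMulLog_mul, Finset.sum_add_distrib]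
    simp only [← Finset.sum_mul, ← Finset.mul_sum, sum_fibre_eq_one μ hu, sum_fibre_eq_one μ hv]
    ring
  unfold cent
  rw [h2]
  ring

end Independent

section IID

variable {τ : Type} [MeasurableSpace τ] (μ₀ : Measure τ) [IsProbabilityMeasure μ₀]

/-- An i.i.d. sequence is stationary. -/
lemma map_succ_infinitePi :
    (Measure.infinitePi fun _ : ℕ => μ₀).map (fun ω n => ω (n + 1))
      = Measure.infinitePi fun _ : ℕ => μ₀ := by
  have h := (ProbabilityTheory.iIndepFun_infinitePi (P := fun _ : ℕ => μ₀)
    (X := fun _ ω => ω) (fun _ => measurable_id)).precomp Nat.succ_injective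
  rw [ProbabilityTheory.iIndepFun_iff_map_fun_eq_infinitePi_map (by fun_prop)] at h
  simp only [Nat.succ_eq_add_one] at h
  rw [h]
  congr 1
  funext i
  exact Measure.infinitePi_map_eval (fun _ : ℕ => μ₀) (i + 1)

/-- In an i.i.d. sequence the first term is independent of the remaining ones. -/
lemma indepFun_zero_succ :
    ProbabilityTheory.IndepFun (fun ω : ℕ → τ => ω 0) (fun ω n => ω (n + 1))
      (Measure.infinitePi fun _ : ℕ => μ₀) := by
  have h := ProbabilityTheory.iIndepFun_infinitePi (P := fun _ : ℕ => μ₀)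
    (X := fun _ ω => ω) (fun _ => measurable_id)
  have h1 := ProbabilityTheory.indep_iSup_of_disjoint
    (m := fun i : ℕ => MeasurableSpace.comap (fun ω : ℕ → τ => ω i) inferInstance)
    (fun i => (measurable_pi_apply i).comap_le) h
    (S := {0}) (T := Ioi 0) (by simp)
  refine ProbabilityTheory.indep_of_indep_of_le_left
    (ProbabilityTheory.indep_of_indep_of_le_right h1 ?_) ?_
  · rw [MeasurableSpace.pi, MeasurableSpace.comap_iSup]
    refine iSup_le fun n => ?_
    rw [MeasurableSpace.comap_comp]
    exact le_iSup₂_of_le (n + 1) (Nat.succ_pos n) le_rfl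
  · exact le_iSup₂_of_le 0 rfl le_rfl

/-- Concatenation of the length `k` prefixes of the sequences `b (ω 0), b (ω 1), …`. -/
def concat {l : ℕ} (k : ℕ) (b : τ → Sig l) (ω : ℕ → τ) : Sig l :=
  fun n => b (ω (n / k)) (n % k)

variable {l : ℕ}

lemma measurable_concat [Countable τ] [MeasurableSingletonClass τ] (k : ℕ) (b : τ → Sig l) :
    Measurable (concat k b) :=
  measurable_pi_lambda _ fun n =>
    (measurable_of_countable fun t => b t (n % k)).comp (measurable_pi_apply (n / k))

lemma word_concat (k : ℕ) (b : τ → Sig l) (ω : ℕ → τ) :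
    word k (concat k b ω) = word k (b (ω 0)) := by
  funext i
  simp only [word, concat, Nat.div_eq_of_lt i.2, Nat.mod_eq_of_lt i.2]

lemma shift_concat {k : ℕ} (hk : 0 < k) (b : τ → Sig l) (ω : ℕ → τ) :
    shift^[k] (concat k b ω) = concat k b (fun n => ω (n + 1)) := by
  rw [shift_iterate]
  funext n
  simp only [concat, Nat.add_div_right n hk, Nat.add_mod_right]

end IID

section Lower

variable {d l : ℕ} {A B : EuclideanSpace ℝ (Fin d) →L[ℝ] EuclideanSpace ℝ (Fin d)}
  {c : Fin l → EuclideanSpace ℝ (Fin d)} {K : Set (EuclideanSpace ℝ (Fin d))}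
  {π : Sig l → EuclideanSpace ℝ (Fin d)} {R : ℝ}
  [Nonempty (Sig l)] [∀ N, Fintype (Cell B π N)]
  {f : EuclideanSpace ℝ (Fin d) → ℝ} {F : ℝ}

/-- Bounded distortion up to a sublinear error: Birkhoff sums of length `k` depend essentially on
the first `k` letters only. -/
lemma AffineCoding.exists_birk_sub_le (h : AffineCoding A B c K π R) (hf : Continuous f)
    (hF : ∀ x, |f (π x)| ≤ F) {ε : ℝ} (hε : 0 < ε) :
    ∃ C, ∀ k : ℕ, ∀ x y : Sig l, word k x = word k y →
      |birk (fun z => f (π z)) k x - birk (fun z => f (π z)) k y| ≤ k * ε + C := by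
  have hF0 : 0 ≤ F := (abs_nonneg _).trans (hF (Classical.arbitrary _))
  have huc := h.compact.uniformContinuousOn_of_continuous hf.continuousOn
  obtain ⟨δ, hδ, huc⟩ := Metric.uniformContinuousOn_iff.1 huc ε hε
  obtain ⟨n₀, hn₀⟩ := eventually_atTop.1
    ((h.tendsto_norm_pow (2 * R)).eventually (gt_mem_nhds hδ))
  -- only the last `n₀` terms of the Birkhoff sums can differ by more than `ε`
  have key : ∀ k : ℕ, ∀ x y : Sig l, word k x = word k y →
      |birk (fun z => f (π z)) k x - birk (fun z => f (π z)) k y|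
        ≤ k * ε + (min k n₀ : ℕ) * (2 * F) := by
    intro k
    induction k with
    | zero => intro x y _; simp [birk]
    | succ k ih =>
      intro x y hxy
      have hb : ∀ z : Sig l, birk (fun z => f (π z)) (k + 1) z
          = birk (fun z => f (π z)) k (shift z) + f (π z) := fun z => by
        unfold birk
        rw [Finset.sum_range_succ']
        rfl
      have h1 := ih (shift x) (shift y) (by
        funext i
        exact congrFun hxy i.succ)
      rw [hb, hb, add_sub_add_comm]
      refine (abs_add_le _ _).trans ?_
      rcases le_or_gt n₀ (k + 1) with hk | hk
      · have h2 := huc _ (h.mem x) _ (h.mem y)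
          ((h.dist_le_of_word_eq hxy).trans_lt (hn₀ _ hk))
        rw [Real.dist_eq] at h2
        have h3 : ((min k n₀ : ℕ) : ℝ) ≤ (min (k + 1) n₀ : ℕ) := by
          exact_mod_cast (by omega : min k n₀ ≤ min (k + 1) n₀)
        have h4 := mul_le_mul_of_nonneg_right h3 (by linarith : 0 ≤ 2 * F)
        push_cast at *
        linarith
      · have h2 := (abs_sub (f (π x)) (f (π y))).trans (add_le_add (hF x) (hF y))
        rw [min_eq_left (by omega)] at h1 ⊢
        push_cast at *
        linarith
  refine ⟨n₀ * (2 * F), fun k x y hxy => (key k x y hxy).trans ?_⟩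
  have : ((min k n₀ : ℕ) : ℝ) ≤ n₀ := by exact_mod_cast min_le_right k n₀
  gcongr

/-- Pick a word of length `k` for each cell of level `k` and concatenate independent random such words
with law `μ₀`. The block entropy of the resulting measure is at least the entropy of `μ₀` minus a
constant independent of `k`: the next point `π (σ^k x)` is independent of the first word, while
`π x` determines the cell that was chosen first, hence the first word, up to a bounded error. -/
lemma AffineCoding.le_blockEnt_concat (h : AffineCoding A B c K π R) {k : ℕ} (hk : 0 < k)
    (μ₀ : Measure (Cell B π k)) [IsProbabilityMeasure μ₀] (b : Cell B π k → Sig l)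
    (hb : ∀ α, cellIdx B k (π (b α)) = α) {M : ℕ} (hM : 2 * R ≤ M) :
    ent μ₀ (fun α => α) - 2 * (d * Real.log (2 * (M + 1 : ℕ) + 1))
      ≤ blockEnt π k ((Measure.infinitePi fun _ : ℕ => μ₀).map (concat k b)) := by
  set P := Measure.infinitePi fun _ : ℕ => μ₀ with hP
  have hco := h.isCoding_range
  have hD := h.finePartitions
  have hΨ := measurable_concat k b
  have hw := measurable_word (l := l) k
  have h0 : Measurable fun ω : ℕ → Cell B π k => ω 0 := measurable_pi_apply 0
  have hwΨ : Measurable fun ω => word k (concat k b ω) := hw.comp hΨ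
  have hπΨ : Measurable fun ω => π (concat k b ω) := hco.measurable.comp hΨ
  have hDΨ : Measurable fun ω => cellMap B π k (π (concat k b ω)) := (hD.measurable k).comp hπΨ
  have e0 : ent P (fun ω => ω 0) = ent μ₀ (fun α => α) := by
    have := ent_map P h0 (u := fun α => α) measurable_id
    rw [← this, hP, Measure.infinitePi_map_eval]
  -- the first word is independent of the point coded by the following ones
  have e1 : hc (P.map (concat k b)) (word k) (fun x => π (shift^[k] x))
      = ent P (fun ω => word k (concat k b ω)) := by
    rw [hD.hc_map P hΨ (hco.measurable_comp k) (fun x => hco.mem _) hw]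
    refine tendsto_nhds_unique (hD.tendsto_cent P ((hco.measurable_comp k).comp hΨ)
      (fun ω => hco.mem _) hwΨ) ?_
    refine tendsto_const_nhds.congr fun N => (cent_of_indepFun P hwΨ
      (((hD.measurable N).comp (hco.measurable_comp k)).comp hΨ) ?_).symm
    have hind := indepFun_zero_succ μ₀
    have := hind.comp (measurable_of_countable fun α => word k (b α))
      (((hD.measurable N).comp hco.measurable).comp hΨ)
    convert this using 1
    · funext ω
      exact word_concat k b ω
    · funext ω
      simp only [Function.comp]
      rw [shift_concat hk]
  -- coordinates of points of the image of `π` differ by at most `M`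
  have hdiff : ∀ (x y : Sig l) (i : Fin d), |π x i - π y i| ≤ M := fun x y i => by
    have h1 := abs_sub (π x i) (π y i)
    have h2 := h.abs_coord_le x i
    have h3 := h.abs_coord_le y i
    linarith
  have hrest : ∀ (x : Sig l) (i : Fin d), (B ^ k) (π x) i
      = (B ^ k) (transl A c k (word k x)) i + π (shift^[k] x) i := fun x i => by
    have := h.pow_apply_eq 0 k x
    rw [zero_add] at this
    rw [this]
    rfl
  -- the first word determines the first cell up to a bounded error
  have e2 : ent P (fun ω => ω 0) ≤ ent P (fun ω => word k (concat k b ω))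
      + d * Real.log (2 * (M + 1 : ℕ) + 1) := by
    refine ent_le_add_of_close P (M + 1) h0 hwΨ (fun α => (α : Fin d → ℤ))
      (fun w i => ⌊(B ^ k) (transl A c k w) i⌋) (fun _ _ _ hq => Subtype.ext hq) fun ω i => ?_
    rw [← hb (ω 0), word_concat]
    refine abs_floor_sub_floor_le ?_
    rw [hrest, add_sub_cancel_left]
    have h2 := h.abs_coord_le (shift^[k] (b (ω 0))) i
    have := (abs_nonneg _).trans h2
    linarith
  -- the cell of the coded point determines the first cell up to a bounded error
  have e3 : ent P (fun ω => (ω 0, cellMap B π k (π (concat k b ω))))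
      ≤ ent P (fun ω => cellMap B π k (π (concat k b ω)))
        + d * Real.log (2 * (M + 1 : ℕ) + 1) := by
    refine ent_le_add_of_close P (M + 1) (h0.prodMk hDΨ) hDΨ (fun z => (z.1 : Fin d → ℤ))
      (fun α => (α : Fin d → ℤ)) (fun _ _ hab hq => Prod.ext (Subtype.ext hq) hab) fun ω i => ?_
    simp only []
    rw [← hb (ω 0), coe_cellMap]
    refine abs_floor_sub_floor_le ?_
    rw [hrest, hrest (concat k b ω), word_concat, add_sub_add_left_eq_sub]
    exact hdiff _ _ i
  have e4 : hc (P.map (concat k b)) (word k) π ≤ d * Real.log (2 * (M + 1 : ℕ) + 1) := by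
    rw [hD.hc_map P hΨ hco.measurable hco.mem hw]
    have h1 := hc_le_cent P hπΨ hwΨ (hD.measurable k)
    have h2 := ent_mono P (h0.prodMk hDΨ) (hwΨ.prodMk hDΨ) (fun ω ω' hab => by
      simp only [Prod.mk.injEq, word_concat] at hab ⊢
      rw [hab.1]
      exact ⟨rfl, hab.2⟩)
    unfold cent at h1
    linarith
  unfold blockEnt
  rw [e1]
  linarith

/-- Upper bound for the partition function: the free energy of some invariant measure reaches
`log Z_k / k` up to an error which is small for large `k`. -/
lemma AffineCoding.exists_log_Zsum_le (h : AffineCoding A B c K π R) (hf : Continuous f)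
    (hF : ∀ x, |f (π x)| ≤ F) {ε : ℝ} (hε : 0 < ε) :
    ∃ C, ∀ k : ℕ, 0 < k → ∃ m : Measure (Sig l), IsProbabilityMeasure m ∧ m.map shift = m ∧
      Real.log (Zsum A K π f k)
        ≤ k * (projEntropy π m + ∫ x, f (π x) ∂m) + k * ε + 2 * Real.log k + C := by
  obtain ⟨V, hV⟩ := h.exists_birk_sub_le hf hF hε
  obtain ⟨M, hM⟩ := exists_nat_ge (2 * R)
  refine ⟨V + Real.log 2 + 2 * (d * Real.log (2 * (M + 1 : ℕ) + 1)), fun k hk => ?_⟩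
  have hco := h.isCoding_range
  have hD := h.finePartitions
  choose b hb hbz using fun α => h.exists_le_two_mul (f := f) hF k α
  set s : Cell B π k → ℝ := fun α => birk (fun y => f (π y)) k (b α) with hs
  have hne : Nonempty (Cell B π k) := ⟨⟨_, mem_range_self (Classical.arbitrary (Sig l))⟩⟩
  set Z := ∑ α, Real.exp (s α) with hZ
  have hZ0 : 0 < Z := Finset.sum_pos (fun _ _ => Real.exp_pos _) Finset.univ_nonempty
  have hZle : Real.log (Zsum A K π f k) ≤ Real.log Z + Real.log 2 := by
    rw [← Real.log_mul hZ0.ne' two_ne_zero, h.Zsum_eq]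
    refine Real.log_le_log (Finset.sum_pos (fun α _ => h.zTerm_pos hF k α)
      Finset.univ_nonempty) ?_
    rw [hZ, mul_comm, Finset.mul_sum]
    exact Finset.sum_le_sum fun α _ => hbz α
  -- the Gibbs weights of the chosen words
  set p : Cell B π k → ℝ := fun α => Real.exp (s α) / Z with hp
  have hp0 : ∀ α, 0 ≤ p α := fun α => div_nonneg (Real.exp_pos _).le hZ0.le
  have hp1 : ∑ α, p α = 1 := by
    simp only [hp]
    rw [← Finset.sum_div, ← hZ, div_self hZ0.ne']
  set μ₀ : Measure (Cell B π k) := ∑ α, ENNReal.ofReal (p α) • Measure.dirac α with hμ₀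
  have hμpr : IsProbabilityMeasure μ₀ := by
    constructor
    simp only [hμ₀, Measure.coe_finsetSum, Finset.sum_apply, Measure.smul_apply, measure_univ,
      smul_eq_mul, mul_one]
    rw [← ENNReal.ofReal_sum_of_nonneg fun α _ => hp0 α, hp1, ENNReal.ofReal_one]
  have hμp : ∀ α, μ₀.real {α} = p α := fun α => by
    classical
    simp only [hμ₀, Measure.real, Measure.coe_finsetSum, Finset.sum_apply, Measure.smul_apply,
      smul_eq_mul, Measure.dirac_apply' _ (measurableSet_singleton α), indicator,
      mem_singleton_iff, Pi.one_apply, mul_ite, mul_one, mul_zero, Finset.sum_ite_eq',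
      Finset.mem_univ, if_true]
    exact ENNReal.toReal_ofReal (hp0 α)
  have hint0 : ∀ g : Cell B π k → ℝ, ∫ α, g α ∂μ₀ = ∑ α, p α * g α := fun g => by
    rw [integral_fintype (Integrable.of_finite)]
    simp only [hμp, smul_eq_mul]
  have hent : ent μ₀ (fun α => α) = Real.log Z - ∑ α, p α * s α := by
    unfold ent
    have : ∀ α, negMulLog (μ₀.real ((fun α => α) ⁻¹' {α}))
        = p α * Real.log Z - p α * s α := fun α => by
      rw [show (fun α : Cell B π k => α) ⁻¹' {α} = {α} from rfl, hμp, negMulLog]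
      have : Real.log (p α) = s α - Real.log Z := by
        simp only [hp]
        rw [Real.log_div (Real.exp_pos _).ne' hZ0.ne', Real.log_exp]
      rw [this]; ring
    simp only [this]
    rw [Finset.sum_sub_distrib, ← Finset.sum_mul, hp1, one_mul]
  set P := Measure.infinitePi fun _ : ℕ => μ₀ with hP
  set ν := P.map (concat k b) with hν
  have hΨ := measurable_concat k b
  have hνpr : IsProbabilityMeasure ν := Measure.isProbabilityMeasure_map hΨ.aemeasurable
  have hνinv : ν.map shift^[k] = ν := by
    have hsucc : Measurable fun (ω : ℕ → Cell B π k) n => ω (n + 1) :=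
      measurable_pi_lambda _ fun n => measurable_pi_apply (n + 1)
    conv_rhs => rw [hν, hP, ← map_succ_infinitePi μ₀]
    rw [hν, Measure.map_map (measurable_shift_iterate k) hΨ, Measure.map_map hΨ hsucc]
    congr 1
    funext ω
    exact shift_concat hk b ω
  have hfm : Measurable fun x => f (π x) := hf.measurable.comp h.measurable
  have hbm : Measurable (birk (fun x => f (π x)) k) :=
    Finset.measurable_fun_sum _ fun i _ => hfm.comp (measurable_shift_iterate i)
  have hνint : ∑ α, p α * s α - (k * ε + V) ≤ ∫ x, birk (fun x => f (π x)) k x ∂ν := by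
    rw [hν, integral_map hΨ.aemeasurable hbm.aestronglyMeasurable, ← hint0,
      ← Measure.infinitePi_map_eval (fun _ : ℕ => μ₀) 0,
      integral_map (measurable_pi_apply 0).aemeasurable
        (measurable_of_finite s).aestronglyMeasurable]
    have i1 : Integrable (fun ω : ℕ → Cell B π k => s (ω 0)) P :=
      Integrable.of_bound (((measurable_of_finite s).comp
        (measurable_pi_apply 0)).aestronglyMeasurable) (k * F)
        (ae_of_all _ fun ω => abs_birk_le hF k _)
    have i2 : Integrable (fun ω => birk (fun x => f (π x)) k (concat k b ω)) P :=
      Integrable.of_bound (hbm.comp hΨ).aestronglyMeasurable (k * F)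
        (ae_of_all _ fun ω => abs_birk_le hF k _)
    have i3 : ∫ ω, (s (ω 0) - (k * ε + V)) ∂P
        ≤ ∫ ω, birk (fun x => f (π x)) k (concat k b ω) ∂P := by
      refine integral_mono (i1.sub (integrable_const _)) i2 fun ω => ?_
      have := (abs_le.1 (hV k _ _ (word_concat k b ω))).1
      simp only [hs]
      linarith
    rw [integral_sub i1 (integrable_const _)] at i3
    simpa using i3
  have hmpr : IsProbabilityMeasure (periodAvg k ν) :=
    isProbabilityMeasure_avg hk fun i => ν.map shift^[i]
  refine ⟨periodAvg k ν, hmpr, map_shift_periodAvg hνinv, ?_⟩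
  have g1 := hco.blockEnt_of_invariant hD _ (map_shift_periodAvg hνinv) k
  have g2 := hco.blockEnt_periodAvg hD hk ν hνinv
  have g3 := h.le_blockEnt_concat hk μ₀ b hb hM
  have g4 : k * ∫ x, f (π x) ∂(periodAvg k ν) = ∫ x, birk (fun x => f (π x)) k x ∂ν := by
    have hk' : (k : ℝ) ≠ 0 := by exact_mod_cast hk.ne'
    rw [integral_periodAvg hfm hF, ← mul_assoc, mul_inv_cancel₀ hk', one_mul]
  rw [hent] at g3
  rw [mul_add, g4, ← g1]
  linarith

end Lower

/-! ### The limit -/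

section Assembly

variable {d l : ℕ}

/-- Projection entropy is at most `log l`, so that the supremum in the theorem is over a bounded set. -/
lemma IsCoding.projEntropy_le {E : Type*} [MetricSpace E] [CompleteSpace E]
    [SecondCountableTopology E] [mE : MeasurableSpace E] [BorelSpace E]
    {T : ℕ → Type*} [∀ N, Fintype (T N)] [∀ N, MeasurableSpace (T N)]
    [∀ N, MeasurableSingletonClass (T N)] {S S' : Fin l → E → E} {K : Set E} {π : Sig l → E}
    (hπ : IsCoding S S' K π) {D : ∀ N, E → T N} (hD : FinePartitions K D) (m : Measure (Sig l))
    [IsProbabilityMeasure m] : projEntropy π m ≤ Real.log l := by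
  have h0 : Measurable fun x : Sig l => x 0 := measurable_pi_apply 0
  have hX : Measurable fun x : Sig l => π (shift x) := hπ.measurable.comp measurable_shift
  have h1 : hc m (fun x => x 0) (fun x => π (shift x)) ≤ Real.log l := by
    refine (hc_le_cent m hX h0 (hD.measurable 0)).trans
      ((cent_le_ent m h0 ((hD.measurable 0).comp hX)).trans ((ent_le_log_card m h0).trans ?_))
    rw [Fintype.card_fin]
  have h2 : 0 ≤ hc m (fun x => x 0) π :=
    ge_of_tendsto' (hD.tendsto_cent m hπ.measurable hπ.mem h0) fun N =>
      cent_nonneg m h0 ((hD.measurable N).comp hπ.measurable)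
  have h3 : projEntropy π m = hc m (fun x => x 0) (fun x => π (shift x))
      - hc m (fun x => x 0) π := rfl
  linarith

/-- The canonical projection is equivariant: `π x = S_{x 0} (π (σ x))`. -/
lemma proj_eq {E : Type*} {S : Fin l → E → E} {K : Set E} (hK : K = ⋃ i, S i '' K)
    {π : Sig l → E} (hπ : ∀ x, (⋂ n, itIm S K x n) = {π x}) (x : Sig l) :
    π x = S (x 0) (π (shift x)) := by
  have h1 : π (shift x) ∈ ⋂ n, itIm S K (shift x) n := by rw [hπ]; rfl
  rw [mem_iInter] at h1
  have h2 : S (x 0) (π (shift x)) ∈ ⋂ n, itIm S K x n := by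
    rw [mem_iInter]
    intro n
    cases n with
    | zero =>
      show _ ∈ K
      rw [hK]
      exact mem_iUnion.2 ⟨x 0, mem_image_of_mem _ (h1 0)⟩
    | succ n => exact mem_image_of_mem _ (h1 n)
  rw [hπ, mem_singleton_iff] at h2
  exact h2.symm

/-- An affine iterated function system with bijective linear part and its canonical projection provide
`AffineCoding` data. -/
lemma exists_affineCoding
    (A : EuclideanSpace ℝ (Fin d) →L[ℝ] EuclideanSpace ℝ (Fin d))
    (hAbij : Function.Bijective A) (hAnorm : ‖A‖ < 1)
    (c : Fin l → EuclideanSpace ℝ (Fin d))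
    (K : Set (EuclideanSpace ℝ (Fin d))) (hKcomp : IsCompact K)
    (hKattr : K = ⋃ i, (fun x => A x + c i) '' K)
    (π : Sig l → EuclideanSpace ℝ (Fin d))
    (hπ : ∀ x, (⋂ n, itIm (fun i x => A x + c i) K x n) = {π x}) :
    ∃ B R, AffineCoding A B c K π R := by
  set e := LinearEquiv.ofBijective A.toLinearMap hAbij with he
  obtain ⟨R, hR⟩ := hKcomp.isBounded.exists_norm_le
  refine ⟨LinearMap.toContinuousLinearMap (e.symm : _ →ₗ[ℝ] _), R, ?_, ?_, hAnorm, hKcomp, hR,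
    fun x => ?_, proj_eq hKattr hπ⟩
  · intro x
    exact e.symm_apply_apply x
  · intro x
    exact e.apply_symm_apply x
  · have h1 : π x ∈ ⋂ n, itIm (fun i x => A x + c i) K x n := by rw [hπ]; rfl
    exact mem_iInter.1 h1 0

end Assembly

end Auxiliary

/-- **Theorem 2.1** (variational principle for projection pressure).
For the affine IFS `S_i x = A x + c_i` with `‖A‖ < 1`, attractor `K` and canonical
projection `π`, and every continuous `f`, the limit
`lim_n (1/n) log ∑_{Q ∈ 𝒬_n, Q∩K≠∅} sup_{α ∈ π⁻¹(Q∩K)} e^{(S_n f∘π)(α)}`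
exists and equals `sup { h_π(σ,m) + ∫ f∘π dm : m ∈ M_σ(Σ) }`. -/
theorem projection_pressure_variational_principle {d l : ℕ} (hl : 0 < l)
    (A : EuclideanSpace ℝ (Fin d) →L[ℝ] EuclideanSpace ℝ (Fin d))
    (hAbij : Function.Bijective A) (hAnorm : ‖A‖ < 1)
    (c : Fin l → EuclideanSpace ℝ (Fin d))
    (K : Set (EuclideanSpace ℝ (Fin d))) (hKcomp : IsCompact K) (hKne : K.Nonempty)
    (hKattr : K = ⋃ i, (fun x => A x + c i) '' K)
    (π : Sig l → EuclideanSpace ℝ (Fin d))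
    (hπ : ∀ x, (⋂ n, itIm (fun i x => A x + c i) K x n) = {π x})
    (f : EuclideanSpace ℝ (Fin d) → ℝ) (hf : Continuous f) :
    Tendsto (fun n : ℕ => Real.log (Zsum A K π f n) / n) atTop
      (nhds (sSup {r : ℝ | ∃ μ : Measure (Sig l), IsProbabilityMeasure μ ∧
        Measure.map shift μ = μ ∧ r = projEntropy π μ + ∫ x, f (π x) ∂μ})) := by
  have hne : Nonempty (Sig l) := ⟨fun _ => ⟨0, hl⟩⟩
  obtain ⟨B, R, h⟩ := exists_affineCoding A hAbij hAnorm c K hKcomp hKattr π hπ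
  have hfin := h.finite_cell
  have hFin : ∀ N, Fintype (Cell B π N) := fun N => Fintype.ofFinite _
  obtain ⟨F, hFK⟩ := hKcomp.exists_bound_of_continuousOn hf.continuousOn
  have hF : ∀ x, |f (π x)| ≤ F := fun x => hFK _ (h.mem x)
  set L := {r : ℝ | ∃ μ : Measure (Sig l), IsProbabilityMeasure μ ∧
        Measure.map shift μ = μ ∧ r = projEntropy π μ + ∫ x, f (π x) ∂μ} with hL
  have hbdd : BddAbove L := by
    refine ⟨Real.log l + F, ?_⟩
    rintro _ ⟨m, hm, -, rfl⟩
    have h1 := h.isCoding_range.projEntropy_le h.finePartitions m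
    have h2 := norm_integral_le_of_norm_le_const (μ := m) (f := fun x => f (π x))
      (ae_of_all _ fun x => hF x)
    rw [probReal_univ, mul_one, Real.norm_eq_abs] at h2
    linarith [le_abs_self (∫ x, f (π x) ∂m)]
  have hLne : L.Nonempty := by
    obtain ⟨C, hC⟩ := h.exists_log_Zsum_le hf hF one_pos
    obtain ⟨m, hm, hinv, -⟩ := hC 1 one_pos
    exact ⟨_, m, hm, hinv, rfl⟩
  refine tendsto_order.2 ⟨fun a ha => ?_, fun a ha => ?_⟩
  · obtain ⟨_, ⟨m, hm, hinv, rfl⟩, hr⟩ := exists_lt_of_lt_csSup hLne ha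
    filter_upwards [h.eventually_le_log_Zsum hf hF m hinv (half_pos (sub_pos.2 hr))] with N hN
    linarith
  · set ε := (a - sSup L) / 2 with hε
    have hε0 : 0 < ε := by rw [hε]; linarith
    obtain ⟨C, hC⟩ := h.exists_log_Zsum_le hf hF hε0
    -- the error terms `2 log k + C` are `o(k)`
    have hlim : Tendsto (fun k : ℕ => 2 * (Real.log k / k) + C / k) atTop (nhds 0) := by
      have h1 : Tendsto (fun k : ℕ => Real.log (k : ℝ) / (k : ℝ)) atTop (nhds 0) :=
        Real.isLittleO_log_id_atTop.tendsto_div_nhds_zero.comp tendsto_natCast_atTop_atTop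
      have h2 := (h1.const_mul 2).add (tendsto_const_div_atTop_nhds_zero_nat C)
      simpa using h2
    filter_upwards [hlim.eventually (gt_mem_nhds hε0), eventually_gt_atTop 0] with k hk hk0
    obtain ⟨m, hm, hinv, hle⟩ := hC k hk0
    have h1 : projEntropy π m + ∫ x, f (π x) ∂m ≤ sSup L := le_csSup hbdd ⟨m, hm, hinv, rfl⟩
    have hk0' : (0 : ℝ) < k := by exact_mod_cast hk0
    have h2 : Real.log (Zsum A K π f k) / k
        ≤ projEntropy π m + ∫ x, f (π x) ∂m + ε + (2 * (Real.log k / k) + C / k) := by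
      rw [div_le_iff₀ hk0']
      refine hle.trans (le_of_eq ?_)
      field_simp
      ring
    linarith

end
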